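/- arXiv:2308.09996 — 2 statements merged into one kernel-verified Lean document; each statement's English description precedes it below -/
import Mathlib

section
/- For every positive integer k there exists a connected finite simple graph G_k (on 6k + 1 vertices) such that pd_R(R/I(G_k)) − 1 − v(J(G_k)) = k, where R is the polynomial ring over a field K in the vertices of G_k. (By Terai's formula, pd_R(R/I(G_k)) − 1 = reg(R/J(G_k)), so reg(R/J(G_k)) − v(J(G_k)) = k.) -/
open MvPolynomial CategoryTheory

noncomputable section

/-- A set of vertices is a vertex cover if it meets every edge. -/
def IsVertexCover {V : Type} (G : SimpleGraph V) (C : Set V) : Prop :=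
  ∀ ⦃u v : V⦄, G.Adj u v → u ∈ C ∨ v ∈ C

/-- A vertex cover minimal with respect to inclusion. -/
def IsMinimalVertexCover {V : Type} (G : SimpleGraph V) (C : Set V) : Prop :=
  IsVertexCover G C ∧ ∀ C' ⊆ C, IsVertexCover G C' → C' = C

/-- `α₀(G)`: the minimum cardinality of a vertex cover of `G`. -/
def coverNumber {V : Type} (G : SimpleGraph V) : ℕ :=
  sInf {k | ∃ C : Set V, IsVertexCover G C ∧ C.ncard = k}

/-- `bight(I(G))`: the maximum cardinality of a minimal vertex cover of `G`. -/
def bigHeight {V : Type} (G : SimpleGraph V) : ℕ :=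
  sSup {k | ∃ C : Set V, IsMinimalVertexCover G C ∧ C.ncard = k}

/-- The edge ideal `I(G) ⊆ K[x_v : v ∈ V]`, generated by the monomials
`x_u * x_v` over the edges `{u,v}` of `G`. -/
def edgeIdeal (K : Type) [Field K] {V : Type} (G : SimpleGraph V) :
    Ideal (MvPolynomial V K) :=
  Ideal.span {m | ∃ u v : V, G.Adj u v ∧ m = X u * X v}

/-- The cover ideal `J(G) = ⋂_{{u,v} ∈ E(G)} ⟨x_u, x_v⟩`. -/
def coverIdeal (K : Type) [Field K] {V : Type} (G : SimpleGraph V) :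
    Ideal (MvPolynomial V K) :=
  ⨅ (u : V) (v : V) (_ : G.Adj u v), Ideal.span {X u, X v}

/-- The v-number of a graded ideal `I`: the least `d ≥ 0` such that there is a
homogeneous polynomial `f` of degree `d` with `I : f` a prime ideal. -/
def vNumber {K : Type} [Field K] {V : Type} (I : Ideal (MvPolynomial V K)) : ℕ :=
  sInf {d | ∃ f : MvPolynomial V K, f.IsHomogeneous d ∧
    (I.colon (Ideal.span {f})).IsPrime}

/-- The homogeneous maximal ideal `⟨x_1, …, x_n⟩` of the polynomial ring. -/
def maxIdeal (K : Type) [Field K] (V : Type) : Ideal (MvPolynomial V K) :=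
  Ideal.span (Set.range (X : V → MvPolynomial V K))

/-- The depth of the module `M` with respect to the ideal `J`: the supremum of
the lengths of regular sequences on `M` consisting of elements of `J`. -/
def mdepth {R : Type} [CommRing R] (J : Ideal R) (M : Type) [AddCommGroup M]
    [Module R M] : ℕ :=
  sSup {k | ∃ rs : List R, rs.length = k ∧ (∀ r ∈ rs, r ∈ J) ∧
    RingTheory.Sequence.IsRegular M rs}

/-- The projective dimension of an `R`-module `M`, characterized by the
vanishing of `Ext^i(M, N)` for all `i > d` and all modules `N`. -/
def projDim (R : Type) [CommRing R] (M : ModuleCat.{0} R) : ℕ :=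
  sInf {d : ℕ | ∀ (N : ModuleCat.{0} R) (i : ℕ), d < i →
    Subsingleton (((Ext R (ModuleCat.{0} R) i).obj (Opposite.op M)).obj N)}

namespace EdgeAux

section Bridge
variable {R : Type} [CommRing R]

lemma old_ext_iff (M N : ModuleCat.{0} R) (n : ℕ) :
    Subsingleton (((Ext R (ModuleCat.{0} R) (n + 1)).obj (Opposite.op M)).obj N) ↔
      Subsingleton (Abelian.Ext M N (n + 1)) := by
  let P := projectiveResolution M
  have e := (P.isoExt (R := R) (n + 1) N)
  rw [e.toLinearEquiv.toEquiv.subsingleton_congr, ← ModuleCat.isZero_iff_subsingleton,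
    ← HomologicalComplex.exactAt_iff_isZero_homology,
    HomologicalComplex.exactAt_iff' _ n (n + 1) (n + 2) (by simp) (by simp),
    ShortComplex.moduleCat_exact_iff]
  constructor
  · intro h
    refine ⟨fun a b => ?_⟩
    suffices ∀ a : Abelian.Ext M N (n + 1), a = 0 by rw [this a, this b]
    intro a
    obtain ⟨f, hf, rfl⟩ := P.extMk_surjective a (n + 2) rfl
    rw [P.extMk_eq_zero_iff _ _ _ _ n rfl]
    obtain ⟨g, hg⟩ := h f hf
    exact ⟨g, hg⟩
  · intro h f hf
    have := (P.extMk_eq_zero_iff (n := n + 1) f (n + 2) rfl hf n rfl).1 (Subsingleton.elim _ _)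
    exact this

lemma projDim_eq (M : ModuleCat.{0} R) (d : ℕ) (h1 : HasProjectiveDimensionLT M (d + 1))
    (h2 : ¬ HasProjectiveDimensionLT M d) : 
    sInf {d : ℕ | ∀ (N : ModuleCat.{0} R) (i : ℕ), d < i →
    Subsingleton (((Ext R (ModuleCat.{0} R) i).obj (Opposite.op M)).obj N)} = d := by
  apply le_antisymm
  · apply Nat.sInf_le
    rintro N (_ | i) hi
    · simp at hi
    rw [old_ext_iff]
    exact HasProjectiveDimensionLT.subsingleton M (d + 1) _ (by omega) _
  · apply le_csInf
    · refine ⟨d, ?_⟩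
      rintro N (_ | i) hi
      · simp at hi
      rw [old_ext_iff]
      exact HasProjectiveDimensionLT.subsingleton M (d + 1) _ (by omega) _
    · intro b hb
      by_contra hlt
      apply h2
      rw [hasProjectiveDimensionLT_iff]
      rintro (_ | i) hi Y e
      · omega
      · have := (old_ext_iff M Y i).1 (hb Y (i + 1) (by omega))
        exact Subsingleton.elim _ _

/-- `0 → R/(I:x) → R/I → R/(I,x) → 0`. -/
def ses (I I₁ : Ideal R) (x : R) (h : ∀ r, r ∈ I₁ ↔ x * r ∈ I) :
    ShortComplex (ModuleCat.{0} R) :=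
  ShortComplex.mk (X₁ := ModuleCat.of R (R ⧸ I₁)) (X₂ := ModuleCat.of R (R ⧸ I))
    (X₃ := ModuleCat.of R (R ⧸ (I ⊔ Ideal.span {x})))
    (ModuleCat.ofHom (Submodule.mapQ I₁ I (LinearMap.mulLeft R x) (fun r hr => (h r).1 hr)))
    (ModuleCat.ofHom (Submodule.mapQ I (I ⊔ Ideal.span {x}) LinearMap.id
      (fun r hr => Ideal.mem_sup_left hr)))
    (by
      apply ModuleCat.hom_ext
      apply LinearMap.ext
      intro r
      obtain ⟨r, rfl⟩ := Submodule.Quotient.mk_surjective _ r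
      change (Submodule.Quotient.mk (x * r) : R ⧸ (I ⊔ Ideal.span {x})) = 0
      rw [Submodule.Quotient.mk_eq_zero]
      exact Ideal.mem_sup_right (Ideal.mul_mem_right _ _ (Ideal.mem_span_singleton_self x)))

lemma ses_shortExact (I I₁ : Ideal R) (x : R) (h : ∀ r, r ∈ I₁ ↔ x * r ∈ I) :
    (ses I I₁ x h).ShortExact where
  exact := by
    rw [ShortComplex.moduleCat_exact_iff]
    intro r hr
    obtain ⟨r, rfl⟩ := Submodule.Quotient.mk_surjective _ r
    change (Submodule.Quotient.mk r : R ⧸ (I ⊔ Ideal.span {x})) = 0 at hr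
    rw [Submodule.Quotient.mk_eq_zero] at hr
    obtain ⟨a, ha, b, hb, rfl⟩ := Submodule.mem_sup.1 hr
    obtain ⟨c, rfl⟩ := Ideal.mem_span_singleton.1 hb
    refine ⟨(Submodule.Quotient.mk c : R ⧸ I₁), ?_⟩
    change (Submodule.Quotient.mk (x * c) : R ⧸ I) = Submodule.Quotient.mk (a + x * c)
    rw [Submodule.Quotient.eq]
    simpa using ha
  mono_f := by
    rw [ModuleCat.mono_iff_injective]
    refine (injective_iff_map_eq_zero (Submodule.mapQ I₁ I (LinearMap.mulLeft R x)
      (fun r hr => (h r).1 hr))).2 ?_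
    intro r hr
    obtain ⟨r, rfl⟩ := Submodule.Quotient.mk_surjective _ r
    change (Submodule.Quotient.mk (x * r) : R ⧸ I) = 0 at hr
    rw [Submodule.Quotient.mk_eq_zero] at hr ⊢
    exact (h r).2 hr
  epi_g := by
    rw [ModuleCat.epi_iff_surjective]
    intro r
    obtain ⟨r, rfl⟩ := Submodule.Quotient.mk_surjective _ r
    exact ⟨(Submodule.Quotient.mk r : R ⧸ I), rfl⟩

lemma ses_f (I : Ideal R) (x : R) (h : ∀ r, r ∈ I ↔ x * r ∈ I) :
    (ses I I x h).f = x • 𝟙 (ModuleCat.of R (R ⧸ I)) := by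
  ext r
  obtain ⟨r, rfl⟩ := Submodule.Quotient.mk_surjective _ r
  rfl

lemma ext_step (I J : Ideal R) (x : R) (h : ∀ r, r ∈ I ↔ x * r ∈ I) (hx : x ∈ J) (n : ℕ)
    (e : Abelian.Ext (ModuleCat.of R (R ⧸ I)) (ModuleCat.of R (R ⧸ J)) n) (he : e ≠ 0) :
    ∃ e' : Abelian.Ext (ModuleCat.of R (R ⧸ (I ⊔ Ideal.span {x})))
      (ModuleCat.of R (R ⧸ J)) (1 + n), e' ≠ 0 := by
  refine ⟨(ses_shortExact I I x h).extClass.comp e rfl, fun h0 => he ?_⟩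
  obtain ⟨y, hy⟩ := Abelian.Ext.contravariant_sequence_exact₁ (ses_shortExact I I x h) _ e rfl h0
  have hz : x • 𝟙 (ModuleCat.of R (R ⧸ J)) = 0 := by
    apply ModuleCat.hom_ext
    apply LinearMap.ext
    intro r
    obtain ⟨r, rfl⟩ := Submodule.Quotient.mk_surjective _ r
    change (Submodule.Quotient.mk (x * r) : R ⧸ J) = 0
    rw [Submodule.Quotient.mk_eq_zero]
    exact Ideal.mul_mem_right _ _ hx
  have key : ∀ y : Abelian.Ext (ModuleCat.of R (R ⧸ I)) (ModuleCat.of R (R ⧸ J)) n,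
      (Abelian.Ext.mk₀ (x • 𝟙 (ModuleCat.of R (R ⧸ I)))).comp y (zero_add n) = 0 := by
    intro y
    rw [Abelian.Ext.mk₀_smul, Abelian.Ext.smul_comp, Abelian.Ext.mk₀_id_comp,
      Abelian.Ext.smul_eq_comp_mk₀, hz]
    simp
  have h3 : e = (Abelian.Ext.mk₀ (x • 𝟙 (ModuleCat.of R (R ⧸ I)))).comp y (zero_add n) := by
    rw [← ses_f I x h]
    exact hy.symm
  exact h3.trans (key y)

end Bridge


section Vars
variable {K : Type} [Field K] {V : Type}

/-- The ideal generated by the variables in `S`. -/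
def PI (K : Type) [Field K] {V : Type} (S : Set V) : Ideal (MvPolynomial V K) :=
  Ideal.span (X '' S)

lemma X_mem_PI {S : Set V} {i : V} (hi : i ∈ S) : (X i : MvPolynomial V K) ∈ PI K S :=
  Ideal.subset_span ⟨i, hi, rfl⟩

lemma X_mem_PI_iff {S : Set V} {i : V} : (X i : MvPolynomial V K) ∈ PI K S ↔ i ∈ S := by
  refine ⟨fun h => ?_, X_mem_PI⟩
  have := (mem_ideal_span_X_image.1 h) (Finsupp.single i 1) (by simp)
  obtain ⟨j, hj, h⟩ := this
  have : i = j := by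
    by_contra hne
    exact h (Finsupp.single_eq_of_ne (Ne.symm hne))
  exact this ▸ hj

open Classical in
lemma PI_eq_ker (S : Set V) : PI K S =
    RingHom.ker (aeval (R := K) (fun i => if i ∈ S then (0 : MvPolynomial V K) else X i)) := by
  apply le_antisymm
  · rw [PI, Ideal.span_le]
    rintro _ ⟨i, hi, rfl⟩
    simp [RingHom.mem_ker, hi]
  · intro f hf
    have : ∀ f : MvPolynomial V K, f - aeval (R := K)
        (fun i => if i ∈ S then (0 : MvPolynomial V K) else X i) f ∈ PI K S := by
      intro f
      induction f using MvPolynomial.induction_on with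
      | C a => simp
      | add p q hp hq =>
        rw [map_add, add_sub_add_comm]
        exact add_mem hp hq
      | mul_X p i hp =>
        rw [map_mul, aeval_X]
        split_ifs with h
        · simpa using Ideal.mul_mem_left _ _ (X_mem_PI h)
        · rw [← sub_mul]
          exact Ideal.mul_mem_right _ _ hp
    have h := this f
    rw [RingHom.mem_ker] at hf
    rwa [hf, sub_zero] at h

instance PI_prime (S : Set V) : (PI K S).IsPrime := by
  rw [PI_eq_ker]
  exact RingHom.ker_isPrime _

lemma PI_insert (S : Set V) (s : V) :
    PI K (insert s S) = PI K S ⊔ Ideal.span {(X s : MvPolynomial V K)} := by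
  rw [PI, PI, Set.image_insert_eq, Ideal.span_insert, sup_comm]

lemma PI_reg (S : Set V) (s : V) (hs : s ∉ S) (r : MvPolynomial V K) :
    r ∈ PI K S ↔ X s * r ∈ PI K S := by
  refine ⟨fun h => Ideal.mul_mem_left _ _ h, fun h => ?_⟩
  rcases (PI_prime S).mem_or_mem h with h | h
  · exact absurd (X_mem_PI_iff.1 h) hs
  · exact h

lemma pd_le (S : Finset V) : HasProjectiveDimensionLT
    (ModuleCat.of (MvPolynomial V K) (MvPolynomial V K ⧸ PI K (S : Set V))) (S.card + 1) := by
  classical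
  induction S using Finset.induction_on with
  | empty =>
    have h : PI K ((∅ : Finset V) : Set V) = ⊥ := by simp [PI]
    have : Module.Projective (MvPolynomial V K)
        (MvPolynomial V K ⧸ PI K ((∅ : Finset V) : Set V)) :=
      Module.Projective.of_equiv (Submodule.quotEquivOfEqBot _ h).symm
    rw [Finset.card_empty, zero_add, ← projective_iff_hasProjectiveDimensionLT_one]
    exact (IsProjective.iff_projective _).1 ‹_›
  | insert s S hs ih =>
    rw [Finset.card_insert_of_notMem hs, Finset.coe_insert, PI_insert]
    exact (ses_shortExact _ _ _ (PI_reg (K := K) (S : Set V) s (by simpa using hs))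
      ).hasProjectiveDimensionLT_X₃ _ ih (by
        exact @hasProjectiveDimensionLT_of_ge _ _ _ _ (S.card + 1) _ (by omega) ih)

lemma ext_ne (S : Finset V) : ∃ e : Abelian.Ext
    (ModuleCat.of (MvPolynomial V K) (MvPolynomial V K ⧸ PI K (S : Set V)))
    (ModuleCat.of (MvPolynomial V K) (MvPolynomial V K ⧸ PI K (Set.univ : Set V))) S.card,
      e ≠ 0 := by
  classical
  induction S using Finset.induction_on with
  | empty =>
    let f : (MvPolynomial V K ⧸ PI K ((∅ : Finset V) : Set V)) →ₗ[MvPolynomial V K]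
      (MvPolynomial V K ⧸ PI K (Set.univ : Set V)) := Submodule.mapQ _ _ LinearMap.id
        (Ideal.span_mono (Set.image_mono (Set.subset_univ _)))
    refine ⟨Abelian.Ext.mk₀ (ModuleCat.ofHom f), fun h => ?_⟩
    replace h := (Abelian.Ext.mk₀_eq_zero_iff _).1 h
    have h1 : f (Submodule.Quotient.mk 1) = 0 := by
      have : f = 0 := by simpa using congrArg ModuleCat.Hom.hom h
      rw [this]; rfl
    change (Submodule.Quotient.mk 1 : MvPolynomial V K ⧸ PI K (Set.univ : Set V)) = 0 at h1
    rw [Submodule.Quotient.mk_eq_zero] at h1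
    exact (PI_prime (K := K) (Set.univ : Set V)).ne_top ((Ideal.eq_top_iff_one _).2 h1)
  | insert s S hs ih =>
    obtain ⟨e, he⟩ := ih
    rw [Finset.card_insert_of_notMem hs, Finset.coe_insert, PI_insert, add_comm]
    exact ext_step _ _ _ (PI_reg (K := K) (S : Set V) s (by simpa using hs))
      (X_mem_PI (Set.mem_univ _)) _ e he

lemma not_pd_lt (S : Finset V) : ¬ HasProjectiveDimensionLT
    (ModuleCat.of (MvPolynomial V K) (MvPolynomial V K ⧸ PI K (S : Set V))) S.card := by
  intro h
  obtain ⟨e, he⟩ := ext_ne (K := K) S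
  exact he (e.eq_zero_of_hasProjectiveDimensionLT S.card le_rfl)

end Vars

section Cover
variable {K : Type} [Field K] {V : Type}

lemma edgeIdeal_le (G : SimpleGraph V) (S : Set V) (h : ∀ u v, G.Adj u v → u ∈ S ∨ v ∈ S) :
    edgeIdeal K G ≤ PI K S := by
  rw [edgeIdeal, Ideal.span_le]
  rintro _ ⟨u, v, huv, rfl⟩
  rcases h u v huv with h | h
  · exact Ideal.mul_mem_right _ _ (X_mem_PI h)
  · exact Ideal.mul_mem_left _ _ (X_mem_PI h)

lemma edge_mem {G : SimpleGraph V} {u v : V} (h : G.Adj u v) :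
    (X u * X v : MvPolynomial V K) ∈ edgeIdeal K G :=
  Ideal.subset_span ⟨u, v, h, rfl⟩

lemma mem_coverIdeal (G : SimpleGraph V) (f : MvPolynomial V K) :
    f ∈ coverIdeal K G ↔ ∀ u v, G.Adj u v → f ∈ PI K {u, v} := by
  simp [coverIdeal, PI, Set.image_pair, Submodule.mem_iInf]

lemma v_lower [Fintype V] (G : SimpleGraph V) (f : MvPolynomial V K) (d : ℕ)
    (hf : f.IsHomogeneous d)
    (hp : ((coverIdeal K G).colon (Ideal.span {f} : Ideal (MvPolynomial V K))).IsPrime) :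
    ∃ u v : V, ∃ A : Finset V, G.Adj u v ∧ A.card ≤ d ∧ u ∉ A ∧ v ∉ A ∧
      ∀ a b, G.Adj a b → a ∉ A → b ∉ A → (u = a ∨ u = b) ∧ (v = a ∨ v = b) := by
  classical
  let s : Finset (V × V) := Finset.univ.filter fun p => G.Adj p.1 p.2 ∧ f ∉ PI K {p.1, p.2}
  have hle : s.inf (fun p => PI K {p.1, p.2}) ≤
      (coverIdeal K G).colon (Ideal.span {f} : Ideal (MvPolynomial V K)) := by
    intro r hr
    rw [Ideal.mem_colon_span_singleton, mem_coverIdeal]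
    intro u v huv
    by_cases hfu : f ∈ PI K {u, v}
    · exact Ideal.mul_mem_left _ _ hfu
    · rw [Submodule.mem_finsetInf] at hr
      exact Ideal.mul_mem_right _ _ (hr (u, v) (by simp [s, huv, hfu]))
  obtain ⟨⟨u, v⟩, hs, hQ⟩ := (Ideal.IsPrime.inf_le' hp).1 hle
  simp only [s, Finset.mem_filter, Finset.mem_univ, true_and] at hs
  obtain ⟨huv, hfu⟩ := hs
  have hfu' := hfu
  rw [PI, mem_ideal_span_X_image] at hfu
  push Not at hfu
  obtain ⟨m, hm, hm0⟩ := hfu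
  refine ⟨u, v, m.support, huv, ?_, ?_, ?_, ?_⟩
  · have h1 : m.degree = d := by
      rw [← hf (mem_support_iff.1 hm), Finsupp.degree_eq_weight_one]
      rfl
    rw [← h1, Finsupp.degree, Finset.card_eq_sum_ones]
    exact Finset.sum_le_sum fun i hi => Nat.one_le_iff_ne_zero.2 (Finsupp.mem_support_iff.1 hi)
  · simpa using hm0 u (by simp)
  · simpa using hm0 v (by simp)
  · intro a b hab ha hb
    have hfab : f ∉ PI K {a, b} := by
      rw [PI, mem_ideal_span_X_image]
      push Not
      refine ⟨m, hm, ?_⟩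
      simp only [Finsupp.mem_support_iff, not_not] at ha hb
      rintro i (rfl | rfl)
      · exact ha
      · exact hb
    have hsub : PI K {u, v} ≤ PI K {a, b} := by
      intro r hr
      have := hQ hr
      rw [Ideal.mem_colon_span_singleton, mem_coverIdeal] at this
      exact ((PI_prime _).mem_or_mem (this a b hab)).resolve_right hfab
    have h1 := X_mem_PI_iff.1 (hsub (X_mem_PI (K := K) (i := u) (by simp)))
    have h2 := X_mem_PI_iff.1 (hsub (X_mem_PI (K := K) (i := v) (by simp)))
    exact ⟨by simpa using h1, by simpa using h2⟩

lemma v_upper (G : SimpleGraph V) (u v : V) (A : Finset V) (huv : G.Adj u v)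
    (hu : u ∉ A) (hv : v ∉ A)
    (h : ∀ a b, G.Adj a b → a ∈ A ∨ b ∈ A ∨ (a = u ∧ b = v) ∨ (a = v ∧ b = u)) :
    ∃ f : MvPolynomial V K, f.IsHomogeneous A.card ∧
      ((coverIdeal K G).colon (Ideal.span {f} : Ideal (MvPolynomial V K))).IsPrime := by
  refine ⟨∏ i ∈ A, X i, ?_, ?_⟩
  · have := IsHomogeneous.prod A (fun i => (X i : MvPolynomial V K)) (fun _ => 1)
      (fun i _ => isHomogeneous_X K i)
    simpa using this
  · have hEq : (coverIdeal K G).colon (Ideal.span {∏ i ∈ A, X i} : Ideal (MvPolynomial V K))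
        = PI K {u, v} := by
      ext r
      rw [Ideal.mem_colon_span_singleton, mem_coverIdeal]
      constructor
      · intro hr
        refine ((PI_prime _).mem_or_mem (hr u v huv)).resolve_right fun hmem => ?_
        obtain ⟨i, hi, him⟩ := (Ideal.IsPrime.prod_mem_iff).1 hmem
        rcases X_mem_PI_iff.1 him with rfl | rfl
        · exact hu hi
        · exact hv hi
      · intro hr a b hab
        have key : ∀ i ∈ A, i ∈ ({a, b} : Set V) → r * ∏ i ∈ A, X i ∈ PI K {a, b} := by
          intro i hi hib
          exact Ideal.mul_mem_left _ _
            (Ideal.mem_of_dvd _ (Finset.dvd_prod_of_mem _ hi) (X_mem_PI hib))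
        rcases h a b hab with h | h | ⟨rfl, rfl⟩ | ⟨rfl, rfl⟩
        · exact key a h (by simp)
        · exact key b h (by simp)
        · exact Ideal.mul_mem_right _ _ hr
        · rw [Set.pair_comm]
          exact Ideal.mul_mem_right _ _ hr
    rw [hEq]
    infer_instance

end Cover

section Graph

/-- Vertex `0` is joined to everything, vertex `1` is joined to `2, …, 5k`. -/
def Gk (k : ℕ) : SimpleGraph (Fin (6 * k + 1)) where
  Adj i j := i ≠ j ∧ (i.1 = 0 ∨ j.1 = 0 ∨ (i.1 = 1 ∧ 2 ≤ j.1 ∧ j.1 ≤ 5 * k) ∨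
    (j.1 = 1 ∧ 2 ≤ i.1 ∧ i.1 ≤ 5 * k))
  symm := ⟨fun i j h => ⟨h.1.symm, by tauto⟩⟩
  loopless := ⟨fun i h => h.1 rfl⟩

lemma Gk_adj (k : ℕ) (i j : Fin (6 * k + 1)) : (Gk k).Adj i j ↔
    i ≠ j ∧ (i.1 = 0 ∨ j.1 = 0 ∨ (i.1 = 1 ∧ 2 ≤ j.1 ∧ j.1 ≤ 5 * k) ∨
    (j.1 = 1 ∧ 2 ≤ i.1 ∧ i.1 ≤ 5 * k)) := Iff.rfl

lemma Gk_connected (k : ℕ) : (Gk k).Connected := by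
  rw [SimpleGraph.connected_iff_exists_forall_reachable]
  refine ⟨0, fun w => ?_⟩
  by_cases h : (0 : Fin (6 * k + 1)) = w
  · rw [h]
  · exact SimpleGraph.Adj.reachable ⟨h, Or.inl rfl⟩

/-- The neighbours of `1` other than `0`. -/
def Yk (k : ℕ) : Finset (Fin (6 * k + 1)) :=
  Finset.univ.filter fun i => 2 ≤ i.1 ∧ i.1 ≤ 5 * k

lemma Yk_card (k : ℕ) (hk : 1 ≤ k) : (Yk k).card = 5 * k - 1 := by
  have h : (Yk k).map Fin.valEmbedding = Finset.Icc 2 (5 * k) := by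
    ext i
    simp only [Yk, Finset.mem_map, Finset.mem_filter, Finset.mem_univ, true_and,
      Fin.valEmbedding_apply, Finset.mem_Icc]
    constructor
    · rintro ⟨a, ha, rfl⟩
      exact ha
    · intro hi
      exact ⟨⟨i, by omega⟩, hi, rfl⟩
  rw [← Finset.card_map Fin.valEmbedding, h, Nat.card_Icc]
  omega

variable {K : Type} [Field K]

lemma pd_main (k : ℕ) (hk : 1 ≤ k) :
    projDim (MvPolynomial (Fin (6 * k + 1)) K)
          (ModuleCat.of (MvPolynomial (Fin (6 * k + 1)) K)
            (MvPolynomial (Fin (6 * k + 1)) K ⧸ edgeIdeal K (Gk k))) = 6 * k := by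
  classical
  let d : Fin (6 * k + 1) := ⟨1, by omega⟩
  have hd0 : d ≠ 0 := by simp [d, Fin.ext_iff]
  let S₁ : Finset (Fin (6 * k + 1)) := {0}ᶜ
  have hS₁ : S₁.card = 6 * k := by simp [S₁, Finset.card_compl]
  let S₂ : Finset (Fin (6 * k + 1)) := insert 0 (Yk k)
  have hS₂ : S₂.card ≤ 6 * k := by
    refine (Finset.card_insert_le _ _).trans ?_
    rw [Yk_card k hk]
    omega
  let S₃ : Finset (Fin (6 * k + 1)) := {0, d}
  have hS₃ : S₃.card ≤ 2 := Finset.card_le_two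
  have h₁ : ∀ r : MvPolynomial (Fin (6 * k + 1)) K,
      r ∈ PI K (S₁ : Set (Fin (6 * k + 1))) ↔ X 0 * r ∈ edgeIdeal K (Gk k) := by
    have hle : PI K (S₁ : Set (Fin (6 * k + 1))) ≤
        (edgeIdeal K (Gk k)).colon {(X 0 : MvPolynomial (Fin (6 * k + 1)) K)} := by
      rw [PI, Ideal.span_le]
      rintro _ ⟨i, hi, rfl⟩
      rw [SetLike.mem_coe, Submodule.mem_colon_singleton]
      have hi' : i ≠ 0 := by simpa [S₁] using hi
      exact edge_mem ⟨hi', Or.inr (Or.inl rfl)⟩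
    intro r
    constructor
    · intro hr
      have := hle hr
      rw [Submodule.mem_colon_singleton, smul_eq_mul, mul_comm r] at this
      exact this
    · intro hr
      have hm := edgeIdeal_le (K := K) (Gk k) (S₁ : Set (Fin (6 * k + 1))) (by
        intro u v huv
        by_contra hcon
        simp only [S₁, Finset.coe_compl, Finset.coe_singleton, Set.mem_compl_iff,
          Set.mem_singleton_iff, not_or, not_not] at hcon
        exact huv.1 (hcon.1.trans hcon.2.symm)) hr
      exact (PI_reg _ 0 (by simp [S₁]) r).2 hm
  have h₂ : ∀ r : MvPolynomial (Fin (6 * k + 1)) K,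
      r ∈ PI K (S₂ : Set (Fin (6 * k + 1))) ↔
        X d * r ∈ edgeIdeal K (Gk k) ⊔ Ideal.span {X 0} := by
    have hle : PI K (S₂ : Set (Fin (6 * k + 1))) ≤
        (edgeIdeal K (Gk k) ⊔ Ideal.span {X 0}).colon
          {(X d : MvPolynomial (Fin (6 * k + 1)) K)} := by
      rw [PI, Ideal.span_le]
      rintro _ ⟨i, hi, rfl⟩
      rw [SetLike.mem_coe, Submodule.mem_colon_singleton, smul_eq_mul]
      have hi' : i = 0 ∨ (2 ≤ i.1 ∧ i.1 ≤ 5 * k) := by simpa [S₂, Yk] using hi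
      rcases hi' with rfl | hi'
      · exact Ideal.mem_sup_right
          (Ideal.mul_mem_right _ _ (Ideal.mem_span_singleton_self _))
      · refine Ideal.mem_sup_left (edge_mem ⟨?_, Or.inr (Or.inr (Or.inr ⟨rfl, hi'⟩))⟩)
        rintro rfl
        simp [d] at hi'
    intro r
    constructor
    · intro hr
      have := hle hr
      rw [Submodule.mem_colon_singleton, smul_eq_mul, mul_comm r] at this
      exact this
    · intro hr
      have hsub : edgeIdeal K (Gk k) ⊔ Ideal.span {X 0} ≤
          PI K (S₂ : Set (Fin (6 * k + 1))) := by
        refine sup_le (edgeIdeal_le _ _ ?_) ?_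
        · intro u v huv
          rw [Gk_adj] at huv
          simp only [S₂, Yk, Finset.coe_insert, Set.mem_insert_iff, Finset.mem_coe,
            Finset.mem_filter, Finset.mem_univ, true_and, Fin.ext_iff, Fin.val_zero]
          tauto
        · rw [Ideal.span_le, Set.singleton_subset_iff]
          exact X_mem_PI (by simp [S₂])
      exact (PI_reg _ d (by simp [S₂, Yk, hd0, d, Fin.ext_iff]) r).2 (hsub hr)
  have h₃ : edgeIdeal K (Gk k) ⊔ Ideal.span {X 0} ⊔ Ideal.span {X d} =
      PI K (S₃ : Set (Fin (6 * k + 1))) := by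
    apply le_antisymm
    · refine sup_le (sup_le (edgeIdeal_le _ _ ?_) ?_) ?_
      · intro u v huv
        rw [Gk_adj] at huv
        simp only [S₃, d, Finset.coe_insert, Finset.coe_singleton, Set.mem_insert_iff,
          Set.mem_singleton_iff, Fin.ext_iff, Fin.val_zero]
        tauto
      · rw [Ideal.span_le, Set.singleton_subset_iff]
        exact X_mem_PI (by simp [S₃])
      · rw [Ideal.span_le, Set.singleton_subset_iff]
        exact X_mem_PI (by simp [S₃])
    · rw [PI, Ideal.span_le]
      rintro _ ⟨i, hi, rfl⟩
      have hi' : i = 0 ∨ i = d := by simpa [S₃] using hi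
      rcases hi' with rfl | rfl
      · exact Ideal.mem_sup_left (Ideal.mem_sup_right (Ideal.mem_span_singleton_self _))
      · exact Ideal.mem_sup_right (Ideal.mem_span_singleton_self _)
  have hp₁ := pd_le (K := K) S₁
  have hn₁ := not_pd_lt (K := K) S₁
  rw [hS₁] at hp₁ hn₁
  have hp₂ := @hasProjectiveDimensionLT_of_ge _ _ _ _ _ (6 * k + 1) (by omega) (pd_le (K := K) S₂)
  have hp₃ := @hasProjectiveDimensionLT_of_ge _ _ _ _ _ (6 * k + 1) (by omega) (pd_le (K := K) S₃)
  rw [← h₃] at hp₃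
  have hq := (ses_shortExact _ _ _ h₂).hasProjectiveDimensionLT_X₂ (6 * k + 1) hp₂ hp₃
  apply projDim_eq
  · exact (ses_shortExact _ _ _ h₁).hasProjectiveDimensionLT_X₂ (6 * k + 1) hp₁ hq
  · intro hcon
    exact hn₁ ((ses_shortExact _ _ _ h₁).hasProjectiveDimensionLT_X₁ (6 * k) hcon hq)

lemma v_main (k : ℕ) (hk : 1 ≤ k) : vNumber (coverIdeal K (Gk k)) = 5 * k - 1 := by
  classical
  let d : Fin (6 * k + 1) := ⟨1, by omega⟩
  let y : Fin (6 * k + 1) := ⟨2, by omega⟩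
  have hy : y ∈ Yk k := by simp [y, Yk]; omega
  have hY0 : (0 : Fin (6 * k + 1)) ∉ Yk k := by simp [Yk]
  apply le_antisymm
  · apply Nat.sInf_le
    have hA : (insert 0 ((Yk k).erase y)).card = 5 * k - 1 := by
      rw [Finset.card_insert_of_notMem (fun h => hY0 (Finset.mem_of_mem_erase h)),
        Finset.card_erase_of_mem hy, Yk_card k hk]
      omega
    have := v_upper (K := K) (Gk k) d y (insert 0 ((Yk k).erase y))
      ⟨by simp [d, y], Or.inr (Or.inr (Or.inl ⟨rfl, le_rfl, by simp [y]; omega⟩))⟩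
      (by simp [d, Yk, Fin.ext_iff]) (by simp [y, Fin.ext_iff])
      (by
        intro a b hab
        rw [Gk_adj] at hab
        simp only [Yk, d, y, Finset.mem_insert, Finset.mem_erase, Finset.mem_filter,
          Finset.mem_univ, true_and, Fin.ext_iff, Fin.val_zero, ne_eq]
        tauto)
    rw [hA] at this
    exact this
  · apply le_csInf
    · obtain ⟨f, hf⟩ := v_upper (K := K) (Gk k) d y (insert 0 ((Yk k).erase y))
        ⟨by simp [d, y], Or.inr (Or.inr (Or.inl ⟨rfl, le_rfl, by simp [y]; omega⟩))⟩
        (by simp [d, Yk, Fin.ext_iff]) (by simp [y, Fin.ext_iff])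
        (by
          intro a b hab
          rw [Gk_adj] at hab
          simp only [Yk, d, y, Finset.mem_insert, Finset.mem_erase, Finset.mem_filter,
            Finset.mem_univ, true_and, Fin.ext_iff, Fin.val_zero, ne_eq]
          tauto)
      exact ⟨_, f, hf⟩
    · rintro e ⟨f, hf, hp⟩
      obtain ⟨u, v, A, huv, hcard, hu, hv, hA⟩ := v_lower (Gk k) f e hf hp
      by_cases h0 : (0 : Fin (6 * k + 1)) ∈ A
      · -- the missing edge is `{1, y}`
        have hsub : ∃ w, insert 0 ((Yk k).erase w) ⊆ A := by
          have hu0 : u ≠ 0 := fun h => hu (h ▸ h0)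
          have hv0 : v ≠ 0 := fun h => hv (h ▸ h0)
          have hu0' : u.1 ≠ 0 := fun h => hu0 (Fin.ext h)
          have hv0' : v.1 ≠ 0 := fun h => hv0 (Fin.ext h)
          have main : ∀ p q : Fin (6 * k + 1), p.1 = 1 → p ∉ A → 
              (∀ a b, (Gk k).Adj a b → a ∉ A → b ∉ A → (q = a ∨ q = b)) → q ≠ p → 
              insert 0 ((Yk k).erase q) ⊆ A := by
            intro p q hp1 hpA h hqp i hi
            rcases Finset.mem_insert.1 hi with rfl | hi
            · exact h0
            · by_contra hiA
              obtain ⟨hiq, hiY⟩ := Finset.mem_erase.1 hi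
              have hiY' : 2 ≤ i.1 ∧ i.1 ≤ 5 * k := by simpa [Yk] using hiY
              have hpi : p ≠ i := by
                rintro rfl
                omega
              rcases h p i ⟨hpi, Or.inr (Or.inr (Or.inl ⟨hp1, hiY'⟩))⟩ hpA hiA with h | h
              · exact hqp h
              · exact hiq h.symm
          rcases huv.2 with h | h | h | h
          · exact absurd h hu0'
          · exact absurd h hv0'
          · exact ⟨v, main u v h.1 hu (fun a b hab ha hb => (hA a b hab ha hb).2) huv.1.symm⟩
          · exact ⟨u, main v u h.1 hv (fun a b hab ha hb => (hA a b hab ha hb).1) huv.1⟩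
        obtain ⟨w, hw⟩ := hsub
        have h1 := Finset.card_le_card hw
        rw [Finset.card_insert_of_notMem (fun h => hY0 (Finset.mem_of_mem_erase h))] at h1
        have h2 := Finset.pred_card_le_card_erase (s := Yk k) (a := w)
        rw [Yk_card k hk] at h2
        omega
      · have hsub : Finset.univ ⊆ insert 0 (insert u (insert v A)) := by
          intro i _
          by_contra hi
          simp only [Finset.mem_insert, not_or] at hi
          have := hA 0 i ⟨Ne.symm hi.1, Or.inl rfl⟩ h0 hi.2.2.2
          have hu0 := this.1.resolve_right (Ne.symm hi.2.1)
          have hv0 := this.2.resolve_right (Ne.symm hi.2.2.1)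
          exact huv.1 (hu0.trans hv0.symm)
        have h1 := Finset.card_le_card hsub
        rw [Finset.card_univ, Fintype.card_fin] at h1
        have h2 := Finset.card_insert_le 0 (insert u (insert v A))
        have h3 := Finset.card_insert_le u (insert v A)
        have h4 := Finset.card_insert_le v A
        omega

lemma main (k : ℕ) (hk : 1 ≤ k) :
    ∃ G : SimpleGraph (Fin (6 * k + 1)), G.Connected ∧
      projDim (MvPolynomial (Fin (6 * k + 1)) K)
          (ModuleCat.of (MvPolynomial (Fin (6 * k + 1)) K)
            (MvPolynomial (Fin (6 * k + 1)) K ⧸ edgeIdeal K G)) - 1 -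
        vNumber (coverIdeal K G) = k := by
  refine ⟨Gk k, Gk_connected k, ?_⟩
  rw [pd_main k hk, v_main k hk]
  omega

end Graph

end EdgeAux

/-- For every positive integer `k` there is a connected graph `G_k` on
`6k + 1` vertices with `pd(R/I(G_k)) - 1 - v(J(G_k)) = k`. -/
theorem exists_connected_graph_projDim_sub_vNumber
    {K : Type} [Field K] (k : ℕ) (hk : 1 ≤ k) :
    ∃ G : SimpleGraph (Fin (6 * k + 1)), G.Connected ∧
      projDim (MvPolynomial (Fin (6 * k + 1)) K)
          (ModuleCat.of (MvPolynomial (Fin (6 * k + 1)) K)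
            (MvPolynomial (Fin (6 * k + 1)) K ⧸ edgeIdeal K G)) - 1 -
        vNumber (coverIdeal K G) = k := by
  exact EdgeAux.main k hk

end
end

section
/- Let k ≥ 1 and let G_k be the connected graph on 6k + 1 vertices obtained by taking k cycles of length 7 and identifying one vertex from each of them to a single common vertex x (the cycles being otherwise pairwise disjoint). Then depth(R/I(G_k)) = 2k; equivalently, pd_R(R/I(G_k)) = 4k + 1. -/
open MvPolynomial CategoryTheory

noncomputable section

/-- Auxiliary relation for the graph `G_k`: the common vertex `x` is `none`;
the `i`-th seven-cycle consists of `x` together with the six vertices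
`(i, 0), …, (i, 5)`, with `x ~ (i,0) ~ (i,1) ~ ⋯ ~ (i,5) ~ x`. -/
def gluedAdjAux (k : ℕ) : Option (Fin k × Fin 6) → Option (Fin k × Fin 6) → Prop
  | none, some p => p.2 = 0 ∨ p.2 = 5
  | some p, some q => p.1 = q.1 ∧ (p.2 : ℕ) + 1 = (q.2 : ℕ)
  | _, _ => False

/-- The connected graph `G_k` on `6k + 1` vertices obtained from `k` disjoint
cycles of length `7` by identifying one vertex of each to a common vertex. -/
def gluedCycles (k : ℕ) : SimpleGraph (Option (Fin k × Fin 6)) :=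
  SimpleGraph.fromRel (gluedAdjAux k)

/-! ### Homological preliminaries -/

section Homological

open RingTheory.Sequence

/-- Weak regularity passes to extensions. -/
theorem isWeaklyRegular_of_exact {R : Type} [CommRing R] (rs : List R) :
    ∀ {A B C : Type} [AddCommGroup A] [AddCommGroup B] [AddCommGroup C]
      [Module R A] [Module R B] [Module R C] (f : A →ₗ[R] B) (g : B →ₗ[R] C),
      Function.Injective f → Function.Exact f g → Function.Surjective g →
      IsWeaklyRegular A rs → IsWeaklyRegular C rs → IsWeaklyRegular B rs := by
  induction rs with
  | nil => intros; exact IsWeaklyRegular.nil _ _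
  | cons r rs ih =>
    intro A B C _ _ _ _ _ _ f g hf hfg hg hA hC
    rw [isWeaklyRegular_cons_iff] at hA hC ⊢
    refine ⟨isSMulRegular_of_range_eq_ker hf (LinearMap.exact_iff.mp hfg).symm hA.1 hC.1, ?_⟩
    refine ih (QuotSMulTop.map r f) (QuotSMulTop.map r g) ?_ (QuotSMulTop.map_exact r hfg hg)
      (QuotSMulTop.map_surjective r hg) hA.2 hC.2
    have h0 : Function.Exact (0 : A →ₗ[R] A) f := by
      rw [LinearMap.exact_iff, LinearMap.ker_eq_bot.mpr hf, LinearMap.range_zero]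
    have := QuotSMulTop.map_first_exact_on_four_term_exact_of_isSMulRegular_last h0 hfg hC.1
    rw [LinearMap.exact_iff] at this
    rw [← LinearMap.ker_eq_bot, this, map_zero, LinearMap.range_zero]

/-- The map `R/A → R/B` given by multiplication by `f`. -/
def mulQuot {R : Type} [CommRing R] (A B : Ideal R) (f : R) (h : ∀ r, r ∈ A ↔ f * r ∈ B) :
    (R ⧸ A) →ₗ[R] (R ⧸ B) :=
  Submodule.mapQ A B (LinearMap.lsmul R R f) (fun r hr => (h r).mp hr)

/-- The projection `R/B → R/C`. -/
def projQuot {R : Type} [CommRing R] (B C : Ideal R) (h : B ≤ C) :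
    (R ⧸ B) →ₗ[R] (R ⧸ C) :=
  Submodule.mapQ B C LinearMap.id h

theorem mulQuot_injective {R : Type} [CommRing R] (A B : Ideal R) (f : R)
    (h : ∀ r, r ∈ A ↔ f * r ∈ B) : Function.Injective (mulQuot A B f h) := by
  rw [injective_iff_map_eq_zero]
  intro a
  obtain ⟨a, rfl⟩ := Submodule.Quotient.mk_surjective _ a
  intro ha
  have ha' : Submodule.Quotient.mk (p := B) (f * a) = 0 := ha
  rw [Submodule.Quotient.mk_eq_zero] at ha' ⊢
  exact (h a).mpr ha'

theorem projQuot_surjective {R : Type} [CommRing R] (B C : Ideal R) (h : B ≤ C) :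
    Function.Surjective (projQuot B C h) := by
  intro a
  obtain ⟨a, rfl⟩ := Submodule.Quotient.mk_surjective _ a
  exact ⟨Submodule.Quotient.mk a, rfl⟩

theorem mulQuot_exact {R : Type} [CommRing R] (A B C : Ideal R) (f : R)
    (h : ∀ r, r ∈ A ↔ f * r ∈ B) (hC : C = B ⊔ Ideal.span {f}) :
    Function.Exact (mulQuot A B f h) (projQuot B C (hC ▸ le_sup_left)) := by
  intro b
  obtain ⟨b, rfl⟩ := Submodule.Quotient.mk_surjective _ b
  constructor
  · intro hb
    have hb' : Submodule.Quotient.mk (p := C) b = 0 := hb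
    rw [Submodule.Quotient.mk_eq_zero, hC, Submodule.mem_sup] at hb'
    obtain ⟨y, hy, z, hz, rfl⟩ := hb'
    obtain ⟨w, rfl⟩ := Ideal.mem_span_singleton'.mp hz
    refine ⟨Submodule.Quotient.mk w, ?_⟩
    change Submodule.Quotient.mk (p := B) (f * w) = _
    rw [Submodule.Quotient.eq]
    have : f * w - (y + w * f) = -y := by ring
    rw [this]
    exact B.neg_mem hy
  · rintro ⟨a, ha⟩
    obtain ⟨a, rfl⟩ := Submodule.Quotient.mk_surjective _ a
    have ha' : Submodule.Quotient.mk (p := B) (f * a) = Submodule.Quotient.mk b := ha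
    change Submodule.Quotient.mk (p := C) b = 0
    rw [Submodule.Quotient.eq] at ha'
    rw [Submodule.Quotient.mk_eq_zero]
    have h1 : f * a ∈ C := by
      rw [hC]
      exact Ideal.mul_mem_right _ _ (le_sup_right (a := B) (Ideal.mem_span_singleton_self f))
    have h2 : f * a - b ∈ C := by
      rw [hC]
      exact (le_sup_left (b := Ideal.span {f})) ha'
    have := C.sub_mem h1 h2
    simpa using this

/-- The short complex `R/A → R/B → R/C`. -/
def colonComplex {R : Type} [CommRing R] (A B C : Ideal R) (f : R)
    (h : ∀ r, r ∈ A ↔ f * r ∈ B) (hC : C = B ⊔ Ideal.span {f}) :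
    ShortComplex (ModuleCat.{0} R) :=
  ModuleCat.shortComplexOfCompEqZero (mulQuot A B f h) (projQuot B C (hC ▸ le_sup_left))
    (mulQuot_exact A B C f h hC).linearMap_comp_eq_zero

theorem colonComplex_shortExact {R : Type} [CommRing R] (A B C : Ideal R) (f : R)
    (h : ∀ r, r ∈ A ↔ f * r ∈ B) (hC : C = B ⊔ Ideal.span {f}) :
    (colonComplex A B C f h hC).ShortExact where
  exact := ModuleCat.shortComplex_exact _ (mulQuot_exact A B C f h hC)
  mono_f := (ModuleCat.mono_iff_injective _).mpr (mulQuot_injective A B f h)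
  epi_g := (ModuleCat.epi_iff_surjective _).mpr (projQuot_surjective B C (hC ▸ le_sup_left))

/-- Vanishing of `Ext^i(N, M)` for `i < n`. -/
def ExtVanish {R : Type} [CommRing R] (N M : ModuleCat.{0} R) (n : ℕ) : Prop :=
  ∀ i < n, Subsingleton (Abelian.Ext N M i)

theorem extVanish_X₃ {R : Type} [CommRing R] (N : ModuleCat.{0} R)
    {S : ShortComplex (ModuleCat.{0} R)} (hS : S.ShortExact) (n : ℕ)
    (h2 : ExtVanish N S.X₂ n) (h1 : ExtVanish N S.X₁ (n + 1)) : ExtVanish N S.X₃ n := by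
  intro i hi
  have := h2 i hi
  have := h1 (i + 1) (by omega)
  refine subsingleton_of_forall_eq 0 fun x => ?_
  obtain ⟨y, rfl⟩ := Abelian.Ext.covariant_sequence_exact₃ N hS x rfl (Subsingleton.elim _ _)
  rw [Subsingleton.elim y 0, Abelian.Ext.zero_comp]

theorem subsingleton_X₁ {R : Type} [CommRing R] (N : ModuleCat.{0} R)
    {S : ShortComplex (ModuleCat.{0} R)} (hS : S.ShortExact) (i : ℕ)
    (hz : ∀ y : Abelian.Ext N S.X₁ i, y.comp (Abelian.Ext.mk₀ S.f) (add_zero i) = 0)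
    (h3 : ∀ j, j + 1 = i → Subsingleton (Abelian.Ext N S.X₃ j)) :
    Subsingleton (Abelian.Ext N S.X₁ i) := by
  refine subsingleton_of_forall_eq 0 fun x => ?_
  cases i with
  | zero =>
    obtain ⟨f, rfl⟩ := (Abelian.Ext.mk₀_bijective N S.X₁).2 x
    have h := hz (Abelian.Ext.mk₀ f)
    rw [Abelian.Ext.mk₀_comp_mk₀, Abelian.Ext.mk₀_eq_zero_iff] at h
    have : f = 0 := by
      have := hS.mono_f
      exact (cancel_mono S.f).mp (by rw [h, Limits.zero_comp])
    rw [this, Abelian.Ext.mk₀_zero]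
  | succ i =>
    obtain ⟨y, rfl⟩ := Abelian.Ext.covariant_sequence_exact₁ N hS x (hz x) rfl
    rw [(h3 i rfl).elim y 0, Abelian.Ext.zero_comp]

/-- Elements of a weakly regular sequence annihilating `N` force vanishing of `Ext`. -/
theorem extVanish_of_isWeaklyRegular {R : Type} [CommRing R] (N : ModuleCat.{0} R) (rs : List R)
    (hN : ∀ r ∈ rs, r ∈ Module.annihilator R N) :
    ∀ (M : ModuleCat.{0} R), IsWeaklyRegular M rs → ExtVanish N M rs.length := by
  induction rs with
  | nil => intro M _ i hi; simp at hi
  | cons a rs ih =>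
    intro M hM i hi
    rw [isWeaklyRegular_cons_iff] at hM
    have hS := hM.1.smulShortComplex_shortExact
    have ha : a ∈ Module.annihilator R N := hN a (by simp)
    have hz : ∀ (y : Abelian.Ext N M i),
        y.comp (Abelian.Ext.mk₀ (M.smulShortComplex a).f) (add_zero i) = 0 := by
      intro y
      have := Abelian.Ext.postcomp_smul_id_eq_zero_of_mem_annihilator (M := M) ha i
      exact DFunLike.congr_fun (congrArg AddCommGrpCat.Hom.hom this) y
    refine subsingleton_X₁ N hS i hz fun j hj => ?_
    exact ih (fun r hr => hN r (by simp [hr])) (ModuleCat.of R (QuotSMulTop a M)) hM.2 j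
        (by simp at hi; omega)

/-- If every projective has `Ext^i(N,P) = 0` for `i < n`, then modules of projective
dimension `≤ p` have `Ext^i(N,M) = 0` for `i + p < n`. -/
theorem extVanish_of_projDim {R : Type} [CommRing R] (N : ModuleCat.{0} R) (n : ℕ)
    (hP : ∀ P : ModuleCat.{0} R, Projective P → ExtVanish N P n) (p : ℕ) :
    ∀ (q : ℕ), q + p = n → ∀ (M : ModuleCat.{0} R), HasProjectiveDimensionLT M (p + 1) →
      ExtVanish N M q := by
  induction p with
  | zero =>
    intro q hq M hM
    have : q = n := by omega
    subst this
    exact hP M (projective_iff_hasProjectiveDimensionLT_one.mpr hM)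
  | succ p ih =>
    intro q hq M hM
    let ⟨P⟩ := EnoughProjectives.presentation M
    have hS : (ShortComplex.mk _ _ (Limits.kernel.condition P.f)).ShortExact :=
      { exact := ShortComplex.exact_kernel P.f }
    have hPp := P.projective
    refine extVanish_X₃ N hS q (fun i hi => hP P.p P.projective i (by omega)) ?_
    refine ih (q + 1) (by omega) _ ?_
    exact hS.hasProjectiveDimensionLT_X₁ (p + 1)
      (hasProjectiveDimensionLT_of_ge P.p 1 (p + 1) (by omega)) hM

/-- Comparison of the two versions of `Ext` in positive degrees. -/
theorem subsingleton_ext_iff {R : Type} [CommRing R] (X Y : ModuleCat.{0} R) (i : ℕ) :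
    Subsingleton (((Ext R (ModuleCat.{0} R) (i + 1)).obj (Opposite.op X)).obj Y) ↔
      Subsingleton (Abelian.Ext X Y (i + 1)) := by
  let P := projectiveResolution X
  have key : Subsingleton (((Ext R (ModuleCat.{0} R) (i + 1)).obj (Opposite.op X)).obj Y) ↔
      ∀ f : P.complex.X (i + 1) ⟶ Y, P.complex.d (i + 2) (i + 1) ≫ f = 0 →
        ∃ g : P.complex.X i ⟶ Y, P.complex.d (i + 1) i ≫ g = f := by
    rw [← ModuleCat.isZero_iff_subsingleton, (P.isoExt (R := R) (i + 1) Y).isZero_iff,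
      ← HomologicalComplex.exactAt_iff_isZero_homology,
      HomologicalComplex.exactAt_iff' _ i (i + 1) (i + 2) (by simp) (by simp),
      ShortComplex.moduleCat_exact_iff]
    rfl
  rw [key]
  constructor
  · intro h
    refine subsingleton_of_forall_eq 0 fun x => ?_
    obtain ⟨f, hf, rfl⟩ := P.extMk_surjective x (i + 2) rfl
    rw [P.extMk_eq_zero_iff f (i + 2) rfl hf i rfl]
    exact h f hf
  · intro h f hf
    rw [← P.extMk_eq_zero_iff f (i + 2) rfl hf i rfl]
    exact Subsingleton.elim _ _

theorem projDim_set_iff {R : Type} [CommRing R] (M : ModuleCat.{0} R) (d : ℕ) :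
    (∀ (N : ModuleCat.{0} R) (i : ℕ), d < i →
      Subsingleton (((Ext R (ModuleCat.{0} R) i).obj (Opposite.op M)).obj N)) ↔
    HasProjectiveDimensionLT M (d + 1) := by
  constructor
  · intro h
    refine HasProjectiveDimensionLT.mk fun i hi Y e => ?_
    obtain ⟨j, rfl⟩ : ∃ j, i = j + 1 := ⟨i - 1, by omega⟩
    exact ((subsingleton_ext_iff M Y j).mp (h Y (j + 1) (by omega))).elim _ _
  · intro h N i hi
    obtain ⟨j, rfl⟩ : ∃ j, i = j + 1 := ⟨i - 1, by omega⟩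
    exact (subsingleton_ext_iff M N j).mpr
      (HasProjectiveDimensionLT.subsingleton M (d + 1) _ (by omega) N)

/-- `(R/J)/r(R/J) ≃ R/(J + r)`. -/
def quotSMulTopEquiv {R : Type} [CommRing R] (J : Ideal R) (r : R) :
    QuotSMulTop r (R ⧸ J) ≃ₗ[R] R ⧸ (J ⊔ Ideal.span {r}) :=
  (Submodule.quotEquivOfEq _ _ (by
    ext x
    obtain ⟨x, rfl⟩ := Submodule.Quotient.mk_surjective _ x
    simp only [Submodule.mem_smul_pointwise_iff_exists, Submodule.mem_map, Submodule.mem_top,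
      true_and]
    constructor
    · rintro ⟨y, hy⟩
      obtain ⟨y, rfl⟩ := Submodule.Quotient.mk_surjective _ y
      exact ⟨r * y, Ideal.mul_mem_right _ _
        (le_sup_right (a := J) (Ideal.mem_span_singleton_self r)), hy⟩
    · rintro ⟨y, hy, hyx⟩
      obtain ⟨u, hu, z, hz, rfl⟩ := Submodule.mem_sup.mp hy
      obtain ⟨w, rfl⟩ := Ideal.mem_span_singleton'.mp hz
      refine ⟨Submodule.Quotient.mk w, ?_⟩
      rw [← hyx, ← Submodule.Quotient.mk_smul, Submodule.mkQ_apply, Submodule.Quotient.eq]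
      have : r • w - (u + w * r) = -u := by rw [smul_eq_mul]; ring
      rw [this]
      exact J.neg_mem hu)).trans
  (Submodule.quotientQuotientEquivQuotient J (J ⊔ Ideal.span {r}) le_sup_left)

theorem isSMulRegular_quot_iff {R : Type} [CommRing R] (J : Ideal R) (r : R) :
    IsSMulRegular (R ⧸ J) r ↔ ∀ x, r * x ∈ J → x ∈ J := by
  rw [isSMulRegular_iff_right_eq_zero_of_smul]
  constructor
  · intro h x hx
    rw [← Submodule.Quotient.mk_eq_zero J]
    apply h
    rw [← Submodule.Quotient.mk_smul, Submodule.Quotient.mk_eq_zero]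
    exact hx
  · intro h x hx
    obtain ⟨x, rfl⟩ := Submodule.Quotient.mk_surjective _ x
    rw [← Submodule.Quotient.mk_smul, Submodule.Quotient.mk_eq_zero] at hx
    rw [Submodule.Quotient.mk_eq_zero]
    exact h x hx

theorem isWeaklyRegular_quot_cons {R : Type} [CommRing R] (J : Ideal R) (r : R) (rs : List R) :
    IsWeaklyRegular (R ⧸ J) (r :: rs) ↔ (∀ x, r * x ∈ J → x ∈ J) ∧
      IsWeaklyRegular (R ⧸ (J ⊔ Ideal.span {r})) rs := by
  rw [isWeaklyRegular_cons_iff, isSMulRegular_quot_iff,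
    (quotSMulTopEquiv J r).isWeaklyRegular_congr]

/-- Dividing by a regular sequence lowers the vanishing range. -/
theorem extVanish_quot {R : Type} [CommRing R] (N : ModuleCat.{0} R) (d : ℕ) (rs : List R) :
    ∀ (J : Ideal R), IsWeaklyRegular (R ⧸ J) rs →
      ExtVanish N (ModuleCat.of R (R ⧸ J)) (d + rs.length) →
      ExtVanish N (ModuleCat.of R (R ⧸ (J ⊔ Ideal.ofList rs))) d := by
  induction rs with
  | nil =>
    intro J _ h
    rw [Ideal.ofList_nil, sup_bot_eq]
    simpa using h
  | cons r rs ih =>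
    intro J hJ h
    rw [isWeaklyRegular_quot_cons] at hJ
    rw [Ideal.ofList_cons, ← sup_assoc]
    refine ih _ hJ.2 ?_
    have hS := colonComplex_shortExact J J _ r
      (fun x => ⟨fun hx => J.mul_mem_left _ hx, hJ.1 x⟩) rfl
    rw [List.length_cons, ← add_assoc] at h
    exact extVanish_X₃ N hS (d + rs.length) (fun i hi => h i (by omega)) h

end Homological
/-! ### Polynomial preliminaries -/

section Poly

open RingTheory.Sequence

theorem X_mul_mem_span_X {K : Type} [Field K] {V : Type} (S : Set V) (t : V) (ht : t ∉ S)
    (r : MvPolynomial V K) (h : X t * r ∈ Ideal.span ((X : V → MvPolynomial V K) '' S)) :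
    r ∈ Ideal.span ((X : V → MvPolynomial V K) '' S) := by
  rw [mem_ideal_span_X_image] at h ⊢
  intro m hm
  have hm' : Finsupp.single t 1 + m ∈ (X t * r).support := by
    rw [mem_support_iff, coeff_X_mul]
    exact mem_support_iff.mp hm
  obtain ⟨i, hi, hne⟩ := h _ hm'
  refine ⟨i, hi, ?_⟩
  have : t ≠ i := fun h => ht (h ▸ hi)
  simpa [Finsupp.single_apply, this] using hne

/-- Sum of the variables in the block with label `j`. -/
def blockForm (K : Type) [Field K] {V J : Type} [Fintype V] [DecidableEq J]
    (π : V → Option J) (j : J) : MvPolynomial V K :=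
  ∑ v with π v = some j, X v

/-- The change of variables `X (t j) ↦ blockForm j`. -/
def blockFwd (K : Type) [Field K] {V J : Type} [Fintype V] [DecidableEq V] [DecidableEq J]
    (π : V → Option J) (t : J → V) : MvPolynomial V K →ₐ[K] MvPolynomial V K :=
  aeval fun v => X v + match π v with
    | none => 0
    | some j => if v = t j then ∑ w with π w = some j ∧ w ≠ t j, X w else 0

/-- The inverse change of variables. -/
def blockBwd (K : Type) [Field K] {V J : Type} [Fintype V] [DecidableEq V] [DecidableEq J]
    (π : V → Option J) (t : J → V) : MvPolynomial V K →ₐ[K] MvPolynomial V K :=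
  aeval fun v => X v - match π v with
    | none => 0
    | some j => if v = t j then ∑ w with π w = some j ∧ w ≠ t j, X w else 0

theorem blockFwd_X_of_ne {K : Type} [Field K] {V J : Type} [Fintype V] [DecidableEq V]
    [DecidableEq J] (π : V → Option J) (t : J → V) (v : V) (h : ∀ j, v ≠ t j) :
    blockFwd K π t (X v) = X v := by
  rw [blockFwd, aeval_X]
  rcases π v with _ | j <;> simp [h]

theorem blockBwd_X_of_ne {K : Type} [Field K] {V J : Type} [Fintype V] [DecidableEq V]
    [DecidableEq J] (π : V → Option J) (t : J → V) (v : V) (h : ∀ j, v ≠ t j) :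
    blockBwd K π t (X v) = X v := by
  rw [blockBwd, aeval_X]
  rcases π v with _ | j <;> simp [h]

theorem blockFwd_X_t {K : Type} [Field K] {V J : Type} [Fintype V] [DecidableEq V]
    [DecidableEq J] (π : V → Option J) (t : J → V) (ht : ∀ j, π (t j) = some j) (j : J) :
    blockFwd K π t (X (t j)) = X (t j) + ∑ w with π w = some j ∧ w ≠ t j, X w := by
  rw [blockFwd, aeval_X, ht j]
  simp

theorem blockBwd_X_t {K : Type} [Field K] {V J : Type} [Fintype V] [DecidableEq V]
    [DecidableEq J] (π : V → Option J) (t : J → V) (ht : ∀ j, π (t j) = some j) (j : J) :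
    blockBwd K π t (X (t j)) = X (t j) - ∑ w with π w = some j ∧ w ≠ t j, X w := by
  rw [blockBwd, aeval_X, ht j]
  simp

theorem ne_t_of {V J : Type} (π : V → Option J) (t : J → V)
    (ht : ∀ j, π (t j) = some j) (j : J) (w : V) (h1 : π w = some j) (h2 : w ≠ t j) :
    ∀ i, w ≠ t i := by
  rintro i rfl
  rw [ht i] at h1
  exact h2 (by rw [Option.some.inj h1])

/-- The change of variables as an equivalence. -/
def blockEquiv (K : Type) [Field K] {V J : Type} [Fintype V] [DecidableEq V] [DecidableEq J]
    (π : V → Option J) (t : J → V) (ht : ∀ j, π (t j) = some j) :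
    MvPolynomial V K ≃ₐ[K] MvPolynomial V K :=
  AlgEquiv.ofAlgHom (blockFwd K π t) (blockBwd K π t)
    (by
      apply MvPolynomial.algHom_ext
      intro v
      rw [AlgHom.comp_apply, AlgHom.id_apply]
      by_cases h : ∃ j, v = t j
      · obtain ⟨j, rfl⟩ := h
        rw [blockBwd_X_t π t ht, map_sub, blockFwd_X_t π t ht, map_sum, add_sub_assoc,
          add_eq_left, sub_eq_zero]
        refine Finset.sum_congr rfl fun w hw => ?_
        rw [Finset.mem_filter] at hw
        rw [blockFwd_X_of_ne π t w (ne_t_of π t ht j w hw.2.1 hw.2.2)]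
      · push Not at h
        rw [blockBwd_X_of_ne π t v h, blockFwd_X_of_ne π t v h])
    (by
      apply MvPolynomial.algHom_ext
      intro v
      rw [AlgHom.comp_apply, AlgHom.id_apply]
      by_cases h : ∃ j, v = t j
      · obtain ⟨j, rfl⟩ := h
        rw [blockFwd_X_t π t ht, map_add, blockBwd_X_t π t ht, map_sum, sub_add,
          sub_eq_self, sub_eq_zero]
        refine Finset.sum_congr rfl fun w hw => ?_
        rw [Finset.mem_filter] at hw
        rw [blockBwd_X_of_ne π t w (ne_t_of π t ht j w hw.2.1 hw.2.2)]
      · push Not at h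
        rw [blockFwd_X_of_ne π t v h, blockBwd_X_of_ne π t v h])

theorem blockEquiv_X_t {K : Type} [Field K] {V J : Type} [Fintype V] [DecidableEq V]
    [DecidableEq J] (π : V → Option J) (t : J → V) (ht : ∀ j, π (t j) = some j) (j : J) :
    blockEquiv K π t ht (X (t j)) = blockForm K π j := by
  change blockFwd K π t (X (t j)) = _
  rw [blockFwd_X_t π t ht, blockForm]
  have : Finset.univ.filter (fun v => π v = some j) =
      insert (t j) (Finset.univ.filter (fun w => π w = some j ∧ w ≠ t j)) := by
    ext w
    simp only [Finset.mem_filter, Finset.mem_univ, true_and, Finset.mem_insert]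
    by_cases h : w = t j
    · simp [h, ht]
    · simp [h]
  rw [this, Finset.sum_insert (by simp)]

theorem block_ideal_eq {K : Type} [Field K] {V J : Type} [Fintype V] [DecidableEq V]
    [DecidableEq J] (π : V → Option J) (t : J → V) (ht : ∀ j, π (t j) = some j)
    (S : Set V) (hS : ∀ j, t j ∉ S) (A : Set J) :
    Ideal.map (blockEquiv K π t ht) (Ideal.span (X '' (S ∪ t '' A))) =
      Ideal.span (X '' S) ⊔ Ideal.span (blockForm K π '' A) := by
  rw [Ideal.map_span, Set.image_union, Set.image_union, Ideal.span_union]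
  congr 2
  · rw [Set.image_image]
    refine Set.image_congr fun s hs => ?_
    exact blockFwd_X_of_ne π t s (fun j h => hS j (h ▸ hs))
  · rw [Set.image_image, Set.image_image]
    exact Set.image_congr fun j _ => blockEquiv_X_t π t ht j

theorem block_regular {K : Type} [Field K] {V J : Type} [Fintype V] [DecidableEq V]
    [DecidableEq J] (π : V → Option J) (t : J → V) (ht : ∀ j, π (t j) = some j)
    (S : Set V) (hS : ∀ j, t j ∉ S) (A : Set J) (a : J) (ha : a ∉ A) (x : MvPolynomial V K)
    (hx : blockForm K π a * x ∈ Ideal.span (X '' S) ⊔ Ideal.span (blockForm K π '' A)) :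
    x ∈ Ideal.span (X '' S) ⊔ Ideal.span (blockForm K π '' A) := by
  rw [← block_ideal_eq π t ht S hS A] at hx ⊢
  obtain ⟨y, rfl⟩ := (blockEquiv K π t ht).surjective x
  rw [← blockEquiv_X_t π t ht, ← map_mul] at hx
  obtain ⟨z, hz, hzx⟩ := (Ideal.mem_map_of_equiv (blockEquiv K π t ht) _).mp hx
  rw [(blockEquiv K π t ht).injective hzx] at hz
  refine Ideal.mem_map_of_mem _ (X_mul_mem_span_X _ (t a) ?_ y hz)
  rintro (h | ⟨j, hj, hja⟩)
  · exact hS a h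
  · have := congrArg π hja
    rw [ht, ht] at this
    exact ha (Option.some.inj this ▸ hj)

theorem block_isWeaklyRegular {K : Type} [Field K] {V J : Type} [Fintype V] [DecidableEq V]
    [DecidableEq J] (π : V → Option J) (t : J → V) (ht : ∀ j, π (t j) = some j)
    (S : Set V) (hS : ∀ j, t j ∉ S) (l : List J) :
    ∀ (A : Set J), l.Nodup → (∀ j ∈ l, j ∉ A) →
    IsWeaklyRegular (MvPolynomial V K ⧸
      (Ideal.span ((X : V → MvPolynomial V K) '' S) ⊔ Ideal.span (blockForm K π '' A)))
      (l.map (blockForm K π)) := by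
  induction l with
  | nil => intros; exact IsWeaklyRegular.nil _ _
  | cons a l ih =>
    intro A hl hA
    rw [List.nodup_cons] at hl
    rw [List.map_cons, isWeaklyRegular_quot_cons]
    refine ⟨block_regular π t ht S hS A a (hA a (by simp)), ?_⟩
    have := ih (insert a A) hl.2 (by
      intro j hj hja
      rcases hja with rfl | hja
      · exact hl.1 hj
      · exact hA j (by simp [hj]) hja)
    rwa [Set.image_insert_eq, Set.insert_eq, Ideal.span_union, sup_comm (Ideal.span {_}),
      ← sup_assoc] at this

theorem span_X_projDim {K : Type} [Field K] {V : Type} [DecidableEq V] (S : Finset V) :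
    HasProjectiveDimensionLT (ModuleCat.of (MvPolynomial V K)
      (MvPolynomial V K ⧸ Ideal.span ((X : V → MvPolynomial V K) '' (S : Set V))))
      (S.card + 1) := by
  induction S using Finset.induction_on with
  | empty =>
    rw [Finset.card_empty, zero_add, ← projective_iff_hasProjectiveDimensionLT_one,
      ← IsProjective.iff_projective]
    exact Module.Projective.of_equiv (Submodule.quotEquivOfEqBot
      (Ideal.span ((X : V → MvPolynomial V K) '' ((∅ : Finset V) : Set V))) (by simp)).symm
  | insert a S ha ih =>
    rw [Finset.card_insert_of_notMem ha]
    have hS := colonComplex_shortExact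
      (Ideal.span ((X : V → MvPolynomial V K) '' (S : Set V)))
      (Ideal.span ((X : V → MvPolynomial V K) '' (S : Set V)))
      (Ideal.span ((X : V → MvPolynomial V K) '' (insert a S : Finset V))) (X a)
      (fun x => ⟨fun hx => Ideal.mul_mem_left _ _ hx,
        X_mul_mem_span_X _ a (by simpa using ha) x⟩)
      (by rw [Finset.coe_insert, Set.image_insert_eq, Set.insert_eq, Ideal.span_union, sup_comm])
    refine hS.hasProjectiveDimensionLT_X₃ (S.card + 1) ih ?_
    have := ih
    exact hasProjectiveDimensionLT_of_ge (ModuleCat.of (MvPolynomial V K)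
      (MvPolynomial V K ⧸ Ideal.span ((X : V → MvPolynomial V K) '' (S : Set V))))
      (S.card + 1) (S.card + 1 + 1) (by omega)

/-- The edge ideal together with the variables in `S`. -/
def killed (K : Type) [Field K] {V : Type} (G : SimpleGraph V) (S : Set V) :
    Ideal (MvPolynomial V K) :=
  edgeIdeal K G ⊔ Ideal.span (X '' S)

theorem mem_killed {K : Type} [Field K] {V : Type} (G : SimpleGraph V) (S : Set V)
    (r : MvPolynomial V K) :
    r ∈ killed K G S ↔ ∀ m ∈ r.support,
      (∃ u v, G.Adj u v ∧ m u ≠ 0 ∧ m v ≠ 0) ∨ ∃ s ∈ S, m s ≠ 0 := by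
  classical
  have h : killed K G S = Ideal.span ((fun s => monomial s (1 : K)) ''
      ({e | ∃ u v, G.Adj u v ∧ e = Finsupp.single u 1 + Finsupp.single v 1} ∪
        ((fun s => Finsupp.single s 1) '' S))) := by
    rw [killed, edgeIdeal, ← Ideal.span_union, Set.image_union]
    congr 2
    · ext p
      simp only [Set.mem_ofPred_eq, Set.mem_image]
      constructor
      · rintro ⟨u, v, huv, rfl⟩
        exact ⟨_, ⟨u, v, huv, rfl⟩, by simp [X, monomial_mul]⟩
      · rintro ⟨_, ⟨u, v, huv, rfl⟩, rfl⟩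
        exact ⟨u, v, huv, by simp [X, monomial_mul]⟩
    · rw [Set.image_image]
      rfl
  rw [h, mem_ideal_span_monomial_image]
  refine forall₂_congr fun m hm => ?_
  constructor
  · rintro ⟨e, (⟨u, v, huv, rfl⟩ | ⟨s, hs, rfl⟩), he⟩
    · left
      refine ⟨u, v, huv, ?_, ?_⟩
      · have := he u
        simp at this
        omega
      · have := he v
        simp at this
        omega
    · right
      refine ⟨s, hs, ?_⟩
      have := he s
      simp at this
      omega
  · rintro (⟨u, v, huv, hu, hv⟩ | ⟨s, hs, hm⟩)
    · refine ⟨_, Or.inl ⟨u, v, huv, rfl⟩, fun w => ?_⟩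
      have hne := huv.ne
      simp only [Finsupp.add_apply, Finsupp.single_apply]
      split_ifs with h1 h2 h2
      · exact absurd (h1.trans h2.symm) hne
      · subst h1; omega
      · subst h2; omega
      · omega
    · refine ⟨_, Or.inr ⟨s, hs, rfl⟩, fun w => ?_⟩
      simp only [Finsupp.single_apply]
      split_ifs with h1
      · subst h1; omega
      · omega

theorem killed_colon {K : Type} [Field K] {V : Type} (G : SimpleGraph V) (S S' : Set V) (v : V)
    (hv : v ∉ S) (hS' : S' = S ∪ {w | G.Adj v w}) (r : MvPolynomial V K) :
    r ∈ killed K G S' ↔ X v * r ∈ killed K G S := by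
  constructor
  · intro hr
    have hle : killed K G S' ≤
        Submodule.comap (LinearMap.lsmul _ _ (X v)) (killed K G S) := by
      subst hS'
      rw [killed, Set.image_union, Ideal.span_union]
      refine sup_le (le_trans (le_sup_left (b := Ideal.span (X '' S))) ?_)
        (sup_le (le_trans (le_sup_right (a := edgeIdeal K G)) ?_) ?_)
      · intro x hx
        exact Ideal.mul_mem_left _ _ hx
      · intro x hx
        exact Ideal.mul_mem_left _ _ hx
      · rw [Ideal.span_le]
        rintro _ ⟨w, hw, rfl⟩
        exact (le_sup_left (b := Ideal.span (X '' S)))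
          (Ideal.subset_span ⟨v, w, hw, rfl⟩)
    exact hle hr
  · intro h
    rw [mem_killed] at h ⊢
    intro m hm
    have hm' : Finsupp.single v 1 + m ∈ (X v * r).support := by
      rw [mem_support_iff, coeff_X_mul]
      exact mem_support_iff.mp hm
    have key : ∀ w, w ≠ v → (Finsupp.single v 1 + m : V →₀ ℕ) w ≠ 0 → m w ≠ 0 := by
      intro w hw h
      simpa [Finsupp.single_apply, Ne.symm hw] using h
    subst hS'
    rcases h _ hm' with ⟨a, b, hab, ha, hb⟩ | ⟨s, hs, hms⟩
    · by_cases hav : a = v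
      · subst hav
        exact Or.inr ⟨b, Or.inr hab, key b hab.ne' hb⟩
      · by_cases hbv : b = v
        · subst hbv
          exact Or.inr ⟨a, Or.inr hab.symm, key a hav ha⟩
        · exact Or.inl ⟨a, b, hab, key a hav ha, key b hbv hb⟩
    · exact Or.inr ⟨s, Or.inl hs, key s (fun h => hv (h ▸ hs)) hms⟩

theorem killed_insert {K : Type} [Field K] {V : Type} (G : SimpleGraph V) (S : Set V) (v : V) :
    killed K G (insert v S) = killed K G S ⊔ Ideal.span {X v} := by
  rw [killed, killed, Set.image_insert_eq, Set.insert_eq, Ideal.span_union,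
    sup_comm (Ideal.span {_}), sup_assoc]

/-- The property established by the decision tree. -/
def GoodIdeal {R : Type} [CommRing R] (rs : List R) (p : ℕ) (I : Ideal R) : Prop :=
  IsWeaklyRegular (R ⧸ I) rs ∧ HasProjectiveDimensionLT (ModuleCat.of R (R ⧸ I)) p

theorem goodIdeal_branch {K : Type} [Field K] {V : Type} (G : SimpleGraph V)
    (rs : List (MvPolynomial V K)) (p : ℕ) (S S₁ S₂ : Set V) (v : V) (hv : v ∉ S)
    (hS₁ : S₁ = S ∪ {w | G.Adj v w}) (hS₂ : S₂ = insert v S)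
    (h1 : GoodIdeal rs p (killed K G S₁)) (h2 : GoodIdeal rs p (killed K G S₂)) :
    GoodIdeal rs p (killed K G S) := by
  have hc := killed_colon (K := K) G S S₁ v hv hS₁
  have he : killed K G S₂ = killed K G S ⊔ Ideal.span {X v} := by
    rw [hS₂, killed_insert]
  refine ⟨isWeaklyRegular_of_exact rs _ _ (mulQuot_injective _ _ _ hc)
    (mulQuot_exact _ _ _ _ hc he) (projQuot_surjective _ _ _) h1.1 h2.1, ?_⟩
  exact (colonComplex_shortExact _ _ _ _ hc he).hasProjectiveDimensionLT_X₂ p h1.2 h2.2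

theorem goodIdeal_leaf {K : Type} [Field K] {V J : Type} [Fintype V] [DecidableEq V]
    [Fintype J] [DecidableEq J] (G : SimpleGraph V)
    (π : V → Option J) (t : J → V) (ht : ∀ j, π (t j) = some j)
    (S : Set V) (hS : ∀ j, t j ∉ S) (hcov : ∀ u v, G.Adj u v → u ∈ S ∨ v ∈ S) (p : ℕ)
    (hp : Fintype.card V + 1 ≤ p + Fintype.card J) :
    GoodIdeal (Finset.univ.toList.map (blockForm K π)) p (killed K G S) := by
  have h : killed K G S = Ideal.span (X '' S) := by
    rw [killed, sup_eq_right, edgeIdeal, Ideal.span_le]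
    rintro _ ⟨u, v, huv, rfl⟩
    rcases hcov u v huv with h | h
    · exact Ideal.mul_mem_right _ _ (Ideal.subset_span ⟨u, h, rfl⟩)
    · exact Ideal.mul_mem_left _ _ (Ideal.subset_span ⟨v, h, rfl⟩)
  rw [h]
  constructor
  · have := block_isWeaklyRegular (K := K) π t ht S hS Finset.univ.toList ∅
      (Finset.nodup_toList _) (by simp)
    rw [Set.image_empty, Ideal.span_empty, sup_bot_eq] at this
    exact this
  · classical
    have h1 := span_X_projDim (K := K) S.toFinset
    rw [Set.coe_toFinset] at h1
    refine hasProjectiveDimensionLT_of_ge _ (S.toFinset.card + 1) p ?_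
    have hinj : Function.Injective t := fun a b hab => by
      have := congrArg π hab
      rwa [ht, ht, Option.some.injEq] at this
    have hd : Disjoint S.toFinset (Finset.univ.image t) := by
      rw [Finset.disjoint_right]
      intro a ha
      obtain ⟨j, -, rfl⟩ := Finset.mem_image.mp ha
      simpa using hS j
    have hc := Finset.card_le_univ (S.toFinset ∪ Finset.univ.image t)
    rw [Finset.card_union_of_disjoint hd, Finset.card_image_of_injective _ hinj,
      Finset.card_univ] at hc
    omega

/-- The residue field. -/
abbrev resField (K : Type) [Field K] (V : Type) : ModuleCat.{0} (MvPolynomial V K) :=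
  ModuleCat.of _ (MvPolynomial V K ⧸ maxIdeal K V)

theorem mem_annihilator_resField {K : Type} [Field K] {V : Type} (r : MvPolynomial V K)
    (hr : r ∈ maxIdeal K V) : r ∈ Module.annihilator (MvPolynomial V K) (resField K V) := by
  change r ∈ Module.annihilator (MvPolynomial V K) (MvPolynomial V K ⧸ maxIdeal K V)
  rwa [Ideal.annihilator_quotient]

theorem extVanish_projective {K : Type} [Field K] {V : Type} [Fintype V] [DecidableEq V]
    (P : ModuleCat.{0} (MvPolynomial V K)) (hP : Projective P) :
    ExtVanish (resField K V) P (Fintype.card V) := by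
  have h0 := block_isWeaklyRegular (K := K) (V := V) some id (fun _ => rfl) ∅ (by simp)
    Finset.univ.toList ∅ (Finset.nodup_toList _) (by simp)
  have hb : blockForm K (some : V → Option V) = X := by
    funext v
    simp [blockForm, Finset.filter_eq']
  rw [hb] at h0
  have h1 : IsWeaklyRegular (MvPolynomial V K)
      ((Finset.univ : Finset V).toList.map (X : V → MvPolynomial V K)) :=
    ((Submodule.quotEquivOfEqBot _ (by simp)).isWeaklyRegular_congr _).mp h0
  have hPm : Module.Projective (MvPolynomial V K) P := (IsProjective.iff_projective _).mpr hP
  have h2 := h1.isWeaklyRegular_lTensor (M₂ := P)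
  have h3 := ((TensorProduct.rid (MvPolynomial V K) P).isWeaklyRegular_congr _).mp h2
  have := extVanish_of_isWeaklyRegular (resField K V) _ ?_ P h3
  · simpa using this
  · intro r hr
    obtain ⟨v, -, rfl⟩ := List.mem_map.mp hr
    exact mem_annihilator_resField _ (Ideal.subset_span ⟨v, rfl⟩)

/-- A socle element gives nonvanishing. -/
theorem not_extVanish_of_socle {K : Type} [Field K] {V : Type} (I : Ideal (MvPolynomial V K))
    (g : MvPolynomial V K) (hg : g ∉ I) (hs : ∀ v, X v * g ∈ I) :
    ¬ ExtVanish (resField K V) (ModuleCat.of _ (MvPolynomial V K ⧸ I)) 1 := by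
  intro h
  have h0 := h 0 (by omega)
  let φ : (MvPolynomial V K ⧸ maxIdeal K V) →ₗ[MvPolynomial V K] (MvPolynomial V K ⧸ I) :=
    Submodule.mapQ _ _ (LinearMap.lsmul _ _ g) (by
      rw [maxIdeal, Ideal.span_le]
      rintro _ ⟨v, rfl⟩
      change g * X v ∈ I
      rw [mul_comm]
      exact hs v)
  have hφ : ModuleCat.ofHom φ = 0 := by
    rw [← Abelian.Ext.mk₀_eq_zero_iff]
    exact h0.elim _ _
  have h1 : φ (Submodule.Quotient.mk 1) = 0 := by
    have := congrArg (fun f => f.hom (Submodule.Quotient.mk 1)) hφ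
    exact this
  have h2 : Submodule.Quotient.mk (p := I) (g * 1) = 0 := h1
  rw [mul_one, Submodule.Quotient.mk_eq_zero] at h2
  exact hg h2

end Poly

/-! ### The decision tree for the glued cycles -/

section Glued

open RingTheory.Sequence

/-- The set of killed variables at a node of the decision tree. -/
def stSet {k : ℕ} (e : Bool) (T : Fin k → Finset (Fin 6)) : Set (Option (Fin k × Fin 6)) :=
  {w | (w = none ∧ e = true) ∨ ∃ p, w = some p ∧ p.2 ∈ T p.1}

theorem none_mem_stSet {k : ℕ} (e : Bool) (T : Fin k → Finset (Fin 6)) :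
    none ∈ stSet e T ↔ e = true := by
  simp [stSet]

theorem some_mem_stSet {k : ℕ} (e : Bool) (T : Fin k → Finset (Fin 6)) (p : Fin k × Fin 6) :
    some p ∈ stSet e T ↔ p.2 ∈ T p.1 := by
  constructor
  · rintro (⟨h, -⟩ | ⟨q, hq, h⟩)
    · exact absurd h (by simp)
    · rw [Option.some.inj hq]
      exact h
  · intro h
    exact Or.inr ⟨p, rfl, h⟩

/-- The neighbours on the path `0 - 1 - 2 - 3 - 4 - 5`. -/
def nb6 (v : Fin 6) : Finset (Fin 6) :=
  Finset.univ.filter fun w => (v : ℕ) + 1 = w ∨ (w : ℕ) + 1 = v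

/-- Terminal nodes of the decision tree in one cycle. -/
def Leaf6 (e : Bool) (U : Finset (Fin 6)) : Prop :=
  (∀ a b : Fin 6, (a : ℕ) + 1 = b → a ∈ U ∨ b ∈ U) ∧
  (∃ l : Fin 6, (l : ℕ) < 3 ∧ l ∉ U) ∧ (∃ l : Fin 6, ¬ (l : ℕ) < 3 ∧ l ∉ U) ∧
  (e = true ∨ (0 ∈ U ∧ 5 ∈ U))

/-- Nodes of the decision tree in one cycle. -/
inductive Good6 (e : Bool) : Finset (Fin 6) → Prop
  | leaf (U : Finset (Fin 6)) (h : Leaf6 e U) : Good6 e U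
  | branch (U : Finset (Fin 6)) (v : Fin 6) (h0 : v ≠ 0) (h5 : v ≠ 5) (hv : v ∉ U)
      (h1 : Good6 e (U ∪ nb6 v)) (h2 : Good6 e (insert v U)) : Good6 e U

theorem good6_true : Good6 true ∅ := by
  refine .branch _ 1 (by decide) (by decide) (by decide) ?_ ?_
  · refine .branch _ 4 (by decide) (by decide) (by decide) ?_ ?_
    · exact .leaf _ (by unfold Leaf6; decide)
    · exact .leaf _ (by unfold Leaf6; decide)
  · refine .branch _ 4 (by decide) (by decide) (by decide) ?_ ?_
    · exact .leaf _ (by unfold Leaf6; decide)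
    · refine .branch _ 2 (by decide) (by decide) (by decide) ?_ ?_
      · exact .leaf _ (by unfold Leaf6; decide)
      · exact .leaf _ (by unfold Leaf6; decide)

theorem good6_false : Good6 false {0, 5} := by
  refine .branch _ 2 (by decide) (by decide) (by decide) ?_ ?_
  · exact .leaf _ (by unfold Leaf6; decide)
  · refine .branch _ 4 (by decide) (by decide) (by decide) ?_ ?_
    · exact .leaf _ (by unfold Leaf6; decide)
    · exact .leaf _ (by unfold Leaf6; decide)

/-- The block of a vertex. -/
def blk (k : ℕ) : Option (Fin k × Fin 6) → Option (Fin k × Fin 2)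
  | none => none
  | some p => some (p.1, if (p.2 : ℕ) < 3 then 0 else 1)

/-- The regular sequence. -/
def theta (K : Type) [Field K] (k : ℕ) : List (MvPolynomial (Option (Fin k × Fin 6)) K) :=
  (Finset.univ : Finset (Fin k × Fin 2)).toList.map (blockForm K (blk k))

theorem adj_none_some {k : ℕ} (p : Fin k × Fin 6) :
    (gluedCycles k).Adj none (some p) ↔ p.2 = 0 ∨ p.2 = 5 := by
  simp [gluedCycles, gluedAdjAux]

theorem adj_some_some {k : ℕ} (p q : Fin k × Fin 6) :
    (gluedCycles k).Adj (some p) (some q) ↔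
      p.1 = q.1 ∧ ((p.2 : ℕ) + 1 = q.2 ∨ (q.2 : ℕ) + 1 = p.2) := by
  obtain ⟨i, a⟩ := p
  obtain ⟨j, b⟩ := q
  simp only [gluedCycles, SimpleGraph.fromRel_adj, gluedAdjAux, ne_eq, Option.some.injEq,
    Prod.mk.injEq, not_and]
  constructor
  · rintro ⟨-, ⟨h, h'⟩ | ⟨h, h'⟩⟩
    · exact ⟨h, Or.inl h'⟩
    · exact ⟨h.symm, Or.inr h'⟩
  · rintro ⟨h, h' | h'⟩
    · exact ⟨fun _ hab => by subst hab; omega, Or.inl ⟨h, h'⟩⟩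
    · exact ⟨fun _ hab => by subst hab; omega, Or.inr ⟨h.symm, h'⟩⟩

theorem good_leaf {K : Type} [Field K] {k : ℕ} (e : Bool) (T : Fin k → Finset (Fin 6))
    (hT : ∀ i, Leaf6 e (T i)) :
    GoodIdeal (theta K k) (4 * k + 2) (killed K (gluedCycles k) (stSet e T)) := by
  have h : ∀ j : Fin k × Fin 2, ∃ v, blk k v = some j ∧ v ∉ stSet e T := by
    rintro ⟨i, b⟩
    obtain ⟨-, ⟨l, hl, hlU⟩, ⟨l', hl', hlU'⟩, -⟩ := hT i
    fin_cases b
    · exact ⟨some (i, l), by simp [blk, hl], by rw [some_mem_stSet]; exact hlU⟩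
    · exact ⟨some (i, l'), by simp [blk, hl'], by rw [some_mem_stSet]; exact hlU'⟩
  choose t ht htS using h
  refine goodIdeal_leaf (gluedCycles k) (blk k) t ht _ htS ?_ _ ?_
  · have key : ∀ p, (gluedCycles k).Adj none (some p) → none ∈ stSet e T ∨ some p ∈ stSet e T := by
      intro p hp
      rw [adj_none_some] at hp
      rw [none_mem_stSet, some_mem_stSet]
      rcases (hT p.1).2.2.2 with h | h
      · exact Or.inl h
      · right
        rcases hp with hp | hp <;> rw [hp]
        · exact h.1
        · exact h.2
    intro u v huv
    rcases u with _ | p <;> rcases v with _ | q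
    · exact absurd rfl huv.ne
    · exact key q huv
    · exact (key p huv.symm).symm
    · rw [adj_some_some] at huv
      rw [some_mem_stSet, some_mem_stSet]
      obtain ⟨hpq, h | h⟩ := huv
      · rw [hpq]; exact (hT q.1).1 _ _ h
      · rw [hpq]; exact ((hT q.1).1 _ _ h).symm
  · simp
    omega

theorem good_all {K : Type} [Field K] {k : ℕ} (e : Bool) (s : Finset (Fin k)) :
    ∀ T : Fin k → Finset (Fin 6), (∀ i ∈ s, Good6 e (T i)) → (∀ i, i ∉ s → Leaf6 e (T i)) →
    GoodIdeal (theta K k) (4 * k + 2) (killed K (gluedCycles k) (stSet e T)) := by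
  induction s using Finset.induction_on with
  | empty =>
    intro T _ hT
    exact good_leaf e T fun i => hT i (by simp)
  | insert a s ha ih =>
    have key : ∀ U, Good6 e U → ∀ T : Fin k → Finset (Fin 6), T a = U →
        (∀ i ∈ s, Good6 e (T i)) → (∀ i, i ∉ s → i ≠ a → Leaf6 e (T i)) →
        GoodIdeal (theta K k) (4 * k + 2) (killed K (gluedCycles k) (stSet e T)) := by
      intro U hU
      induction hU with
      | leaf U hU =>
        intro T hTa h1 h2
        refine ih T h1 fun i hi => ?_
        by_cases hia : i = a
        · rw [hia, hTa]; exact hU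
        · exact h2 i hi hia
      | branch U v h0 h5 hv _ _ ih1 ih2 =>
        intro T hTa h1 h2
        have upd : ∀ W i, i ≠ a → Function.update T a W i = T i := fun W i hi =>
          Function.update_of_ne hi _ _
        refine goodIdeal_branch _ _ _ _ (stSet e (Function.update T a (U ∪ nb6 v)))
          (stSet e (Function.update T a (insert v U))) (some (a, v)) ?_ ?_ ?_
          (ih1 _ (Function.update_self _ _ _) ?_ ?_) (ih2 _ (Function.update_self _ _ _) ?_ ?_)
        · rw [some_mem_stSet, hTa]; exact hv
        · ext w
          rcases w with _ | ⟨i, l⟩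
          · have : ¬ (gluedCycles k).Adj (some (a, v)) none := by
              rw [SimpleGraph.adj_comm, adj_none_some]; simp [h0, h5]
            simp [none_mem_stSet, this]
          · rw [Set.mem_union, some_mem_stSet, some_mem_stSet, Set.mem_ofPred_eq, adj_some_some]
            by_cases hi : i = a
            · subst hi
              simp [hTa, nb6]
            · simp [hi, Ne.symm hi]
        · ext w
          rcases w with _ | ⟨i, l⟩
          · simp [none_mem_stSet]
          · rw [Set.mem_insert_iff, some_mem_stSet, some_mem_stSet]
            by_cases hi : i = a
            · subst hi
              simp [hTa]
            · simp [hi]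
        · intro i hi; rw [upd _ i (fun h => ha (h ▸ hi))]; exact h1 i hi
        · intro i hi hia; rw [upd _ i hia]; exact h2 i hi hia
        · intro i hi; rw [upd _ i (fun h => ha (h ▸ hi))]; exact h1 i hi
        · intro i hi hia; rw [upd _ i hia]; exact h2 i hi hia
    intro T h1 h2
    exact key (T a) (h1 a (by simp)) T rfl (fun i hi => h1 i (by simp [hi]))
      (fun i hi hia => h2 i (by simp [hi, hia]))

theorem good_edgeIdeal (K : Type) [Field K] (k : ℕ) :
    GoodIdeal (theta K k) (4 * k + 2) (edgeIdeal K (gluedCycles k)) := by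
  have h : edgeIdeal K (gluedCycles k) = killed K (gluedCycles k) ∅ := by
    simp [killed]
  rw [h]
  refine goodIdeal_branch _ _ _ _ (stSet false fun _ => {0, 5}) (stSet true fun _ => ∅) none
    (by simp) ?_ ?_ (good_all _ Finset.univ _ (fun _ _ => good6_false) (by simp))
    (good_all _ Finset.univ _ (fun _ _ => good6_true) (by simp))
  · ext w
    rcases w with _ | p
    · simp [none_mem_stSet]
    · simp [some_mem_stSet, adj_none_some]
  · ext w
    rcases w with _ | p
    · simp [none_mem_stSet]
    · simp [some_mem_stSet]

theorem theta_length (K : Type) [Field K] (k : ℕ) : (theta K k).length = 2 * k := by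
  simp [theta, mul_comm]

theorem blockForm_zero (K : Type) [Field K] (k : ℕ) (i : Fin k) :
    blockForm K (blk k) (i, 0) = X (some (i, 0)) + X (some (i, 1)) + X (some (i, 2)) := by
  have : Finset.univ.filter (fun v => blk k v = some (i, 0)) =
      {some (i, 0), some (i, 1), some (i, 2)} := by
    ext w
    rw [Finset.mem_filter]
    rcases w with _ | ⟨j, l⟩
    · simp [blk]
    · fin_cases l <;> simp [blk]
  rw [blockForm, this]
  simp [Finset.sum_insert, add_assoc]

theorem blockForm_one (K : Type) [Field K] (k : ℕ) (i : Fin k) :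
    blockForm K (blk k) (i, 1) = X (some (i, 3)) + X (some (i, 4)) + X (some (i, 5)) := by
  have : Finset.univ.filter (fun v => blk k v = some (i, 1)) =
      {some (i, 3), some (i, 4), some (i, 5)} := by
    ext w
    rw [Finset.mem_filter]
    rcases w with _ | ⟨j, l⟩
    · simp [blk]
    · fin_cases l <;> simp [blk]
  rw [blockForm, this]
  simp [Finset.sum_insert, add_assoc]

/-- The ideal generated by the edge ideal and the regular sequence. -/
def bigIdeal (K : Type) [Field K] (k : ℕ) : Ideal (MvPolynomial (Option (Fin k × Fin 6)) K) :=
  edgeIdeal K (gluedCycles k) ⊔ Ideal.ofList (theta K k)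

theorem edge_mem_bigIdeal {K : Type} [Field K] {k : ℕ} (u v : Option (Fin k × Fin 6))
    (h : (gluedCycles k).Adj u v) : (X u * X v : MvPolynomial _ K) ∈ bigIdeal K k :=
  Ideal.mem_sup_left (Ideal.subset_span ⟨u, v, h, rfl⟩)

theorem blockForm_mem_bigIdeal {K : Type} [Field K] {k : ℕ} (j : Fin k × Fin 2) :
    blockForm K (blk k) j ∈ bigIdeal K k := by
  refine Ideal.mem_sup_right (Ideal.subset_span ?_)
  change _ ∈ theta K k
  simp [theta]

/-- The socle element. -/
def socleElt (K : Type) [Field K] (k : ℕ) : MvPolynomial (Option (Fin k × Fin 6)) K :=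
  ∏ i, (X (some (i, 1)) * X (some (i, 4)))

theorem X_mul_socleElt {K : Type} [Field K] {k : ℕ} (hk : 1 ≤ k) (v : Option (Fin k × Fin 6)) :
    X v * socleElt K k ∈ bigIdeal K k := by
  have red : ∀ i, X v * (X (some (i, 1)) * X (some (i, 4))) ∈ bigIdeal K k →
      X v * socleElt K k ∈ bigIdeal K k := by
    intro i h
    obtain ⟨r, hr⟩ : (X (some (i, 1)) * X (some (i, 4))) ∣ socleElt K k :=
      Finset.dvd_prod_of_mem (fun i => (X (some (i, 1)) * X (some (i, 4)) :
        MvPolynomial (Option (Fin k × Fin 6)) K)) (Finset.mem_univ i)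
    rw [hr, ← mul_assoc]
    exact Ideal.mul_mem_right _ _ h
  have e : ∀ (i : Fin k) (a b : Fin 6), (a : ℕ) + 1 = b →
      (X (some (i, a)) * X (some (i, b)) : MvPolynomial _ K) ∈ bigIdeal K k := fun i a b h =>
    edge_mem_bigIdeal _ _ ((adj_some_some _ _).mpr ⟨rfl, Or.inl h⟩)
  have t1 : ∀ i : Fin k, (X (some (i, 0)) + X (some (i, 1)) + X (some (i, 2)) :
      MvPolynomial _ K) ∈ bigIdeal K k := fun i => by
    rw [← blockForm_zero]; exact blockForm_mem_bigIdeal _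
  have t2 : ∀ i : Fin k, (X (some (i, 3)) + X (some (i, 4)) + X (some (i, 5)) :
      MvPolynomial _ K) ∈ bigIdeal K k := fun i => by
    rw [← blockForm_one]; exact blockForm_mem_bigIdeal _
  rcases v with _ | ⟨i, l⟩
  · let i : Fin k := ⟨0, hk⟩
    refine red i ?_
    have hx0 : (X none * X (some (i, 0)) : MvPolynomial _ K) ∈ bigIdeal K k :=
      edge_mem_bigIdeal _ _ ((adj_none_some _).mpr (Or.inl rfl))
    have hx5 : (X none * X (some (i, 5)) : MvPolynomial _ K) ∈ bigIdeal K k :=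
      edge_mem_bigIdeal _ _ ((adj_none_some _).mpr (Or.inr rfl))
    have h := Ideal.sub_mem _ (Ideal.sub_mem _
      (Ideal.mul_mem_left _ (X none * X (some (i, 4))) (t1 i))
      (Ideal.mul_mem_left _ (X (some (i, 4))) hx0))
      (Ideal.sub_mem _ (Ideal.sub_mem _
        (Ideal.mul_mem_left _ (X none * X (some (i, 2))) (t2 i))
        (Ideal.mul_mem_left _ (X none) (e i 2 3 rfl)))
        (Ideal.mul_mem_left _ (X (some (i, 2))) hx5))
    convert h using 1
    ring
  · refine red i ?_
    fin_cases l
    · convert Ideal.mul_mem_left _ (X (some (i, 4))) (e i 0 1 rfl) using 1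
      change X (some (i, 0)) * _ = _
      ring
    · convert Ideal.sub_mem _ (Ideal.sub_mem _
        (Ideal.mul_mem_left _ (X (some (i, 1)) * X (some (i, 4))) (t1 i))
        (Ideal.mul_mem_left _ (X (some (i, 4))) (e i 0 1 rfl)))
        (Ideal.mul_mem_left _ (X (some (i, 4))) (e i 1 2 rfl)) using 1
      change X (some (i, 1)) * _ = _
      ring
    · convert Ideal.mul_mem_left _ (X (some (i, 4))) (e i 1 2 rfl) using 1
      change X (some (i, 2)) * _ = _
      ring
    · convert Ideal.mul_mem_left _ (X (some (i, 1))) (e i 3 4 rfl) using 1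
      change X (some (i, 3)) * _ = _
      ring
    · convert Ideal.sub_mem _ (Ideal.sub_mem _
        (Ideal.mul_mem_left _ (X (some (i, 1)) * X (some (i, 4))) (t2 i))
        (Ideal.mul_mem_left _ (X (some (i, 1))) (e i 3 4 rfl)))
        (Ideal.mul_mem_left _ (X (some (i, 1))) (e i 4 5 rfl)) using 1
      change X (some (i, 4)) * _ = _
      ring
    · convert Ideal.mul_mem_left _ (X (some (i, 1))) (e i 4 5 rfl) using 1
      change X (some (i, 5)) * _ = _
      ring

/-- The images of the variables under the test homomorphism. -/
def testVal (K : Type) [Field K] (k : ℕ) :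
    Option (Fin k × Fin 6) → MvPolynomial (Fin k × Fin 2) K
  | none => 0
  | some p => ![-X (p.1, 0), X (p.1, 0), 0, 0, X (p.1, 1), -X (p.1, 1)] p.2

theorem testVal_mul (K : Type) [Field K] (k : ℕ) (i : Fin k) (a b : Fin 6) (h : (a : ℕ) + 1 = b) :
    testVal K k (some (i, a)) * testVal K k (some (i, b)) ∈
      Ideal.span (Set.range fun j : Fin k × Fin 2 => (X j ^ 2 : MvPolynomial (Fin k × Fin 2) K)) := by
  have hs : ∀ j : Fin k × Fin 2, (X j ^ 2 : MvPolynomial (Fin k × Fin 2) K) ∈ Ideal.span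
      (Set.range fun j : Fin k × Fin 2 => (X j ^ 2 : MvPolynomial (Fin k × Fin 2) K)) :=
    fun j => Ideal.subset_span ⟨j, rfl⟩
  obtain ⟨a, ha⟩ := a
  obtain ⟨b, hb⟩ := b
  simp only at h
  subst h
  have h5 : a < 5 := by omega
  interval_cases a
  · have : testVal K k (some (i, 0)) * testVal K k (some (i, 1)) = -(X (i, 0) ^ 2) := by
      simp [testVal]; ring
    exact this ▸ Ideal.neg_mem_iff _ |>.mpr (hs _)
  · have : testVal K k (some (i, 1)) * testVal K k (some (i, 2)) = 0 := by
      simp [testVal]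
    exact this ▸ Ideal.zero_mem _
  · have : testVal K k (some (i, 2)) * testVal K k (some (i, 3)) = 0 := by
      simp [testVal]
    exact this ▸ Ideal.zero_mem _
  · have : testVal K k (some (i, 3)) * testVal K k (some (i, 4)) = 0 := by
      simp [testVal]
    exact this ▸ Ideal.zero_mem _
  · have : testVal K k (some (i, 4)) * testVal K k (some (i, 5)) = -(X (i, 1) ^ 2) := by
      simp [testVal]; ring
    exact this ▸ Ideal.neg_mem_iff _ |>.mpr (hs _)

theorem bigIdeal_le (K : Type) [Field K] (k : ℕ) :
    bigIdeal K k ≤ Ideal.comap (aeval (testVal K k) : _ →ₐ[K] MvPolynomial (Fin k × Fin 2) K)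
      (Ideal.span (Set.range fun j : Fin k × Fin 2 =>
        (X j ^ 2 : MvPolynomial (Fin k × Fin 2) K))) := by
  refine sup_le ?_ ?_
  · rw [edgeIdeal, Ideal.span_le]
    rintro _ ⟨u, v, huv, rfl⟩
    rw [SetLike.mem_coe, Ideal.mem_comap, map_mul, aeval_X, aeval_X]
    rcases u with _ | ⟨i, a⟩
    · simp [testVal]
    rcases v with _ | ⟨j, b⟩
    · simp [testVal]
    rw [adj_some_some] at huv
    obtain ⟨hij, h | h⟩ := huv
    · simp only at hij h
      subst hij
      exact testVal_mul K k i a b h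
    · simp only at hij h
      subst hij
      rw [mul_comm]
      exact testVal_mul K k i b a h
  · rw [Ideal.ofList, Ideal.span_le]
    intro r hr
    have hr' : r ∈ theta K k := hr
    rw [theta, List.mem_map] at hr'
    obtain ⟨⟨i, b⟩, -, rfl⟩ := hr'
    rw [SetLike.mem_coe, Ideal.mem_comap]
    convert Ideal.zero_mem _
    fin_cases b
    · change aeval _ (blockForm K (blk k) (i, 0)) = 0
      rw [blockForm_zero]
      simp [testVal]
    · change aeval _ (blockForm K (blk k) (i, 1)) = 0
      rw [blockForm_one]
      simp [testVal]

theorem prod_X_notMem {K : Type} [Field K] {J : Type} [Fintype J] [DecidableEq J] :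
    (∏ j, X j : MvPolynomial J K) ∉
      Ideal.span (Set.range fun j : J => (X j ^ 2 : MvPolynomial J K)) := by
  have h1 : (Set.range fun j : J => (X j ^ 2 : MvPolynomial J K)) =
      (fun s => monomial s (1 : K)) '' (Set.range fun j : J => Finsupp.single j 2) := by
    rw [← Set.range_comp]
    congr 1
    funext j
    simp [X_pow_eq_monomial]
  have h2 : (∏ j, X j : MvPolynomial J K) = monomial (∑ j, Finsupp.single j 1) 1 := by
    rw [monomial_sum_one]
    rfl
  rw [h1, h2, mem_ideal_span_monomial_image]
  intro h
  obtain ⟨_, ⟨j, rfl⟩, hj⟩ := h (∑ j, Finsupp.single j 1) (by simp [mem_support_iff])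
  have := hj j
  simp [Finsupp.finsetSum_apply, Finsupp.single_apply] at this

theorem socleElt_notMem (K : Type) [Field K] (k : ℕ) : socleElt K k ∉ bigIdeal K k := by
  intro h
  have h1 := bigIdeal_le K k h
  rw [Ideal.mem_comap] at h1
  refine prod_X_notMem (K := K) (J := Fin k × Fin 2) ?_
  convert h1 using 1
  rw [socleElt, map_prod, Fintype.prod_prod_type]
  refine Finset.prod_congr rfl fun i _ => ?_
  simp [testVal]

theorem theta_mem_maxIdeal {K : Type} [Field K] {k : ℕ} :
    ∀ r ∈ theta K k, r ∈ maxIdeal K (Option (Fin k × Fin 6)) := by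
  intro r hr
  rw [theta, List.mem_map] at hr
  obtain ⟨j, -, rfl⟩ := hr
  exact Ideal.sum_mem _ fun v _ => Ideal.subset_span ⟨v, rfl⟩

theorem theta_isRegular (K : Type) [Field K] (k : ℕ) :
    IsRegular (MvPolynomial (Option (Fin k × Fin 6)) K ⧸ edgeIdeal K (gluedCycles k))
      (theta K k) := by
  refine ⟨(good_edgeIdeal K k).1, fun h => ?_⟩
  have h1 : (Ideal.Quotient.mk (edgeIdeal K (gluedCycles k)) 1) ∈ (Ideal.ofList (theta K k) •
      (⊤ : Submodule (MvPolynomial (Option (Fin k × Fin 6)) K)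
        (MvPolynomial (Option (Fin k × Fin 6)) K ⧸ edgeIdeal K (gluedCycles k)))) := by
    rw [← h]; trivial
  rw [Ideal.smul_top_eq_map, Submodule.restrictScalars_mem, Ideal.Quotient.algebraMap_eq,
    Ideal.mem_quotient_iff_mem_sup, sup_comm] at h1
  have h2 : bigIdeal K k = ⊤ := (Ideal.eq_top_iff_one _).mpr h1
  exact socleElt_notMem K k (h2 ▸ trivial)

theorem not_extVanish_glued (K : Type) [Field K] (k : ℕ) (hk : 1 ≤ k) :
    ¬ ExtVanish (resField K (Option (Fin k × Fin 6))) (ModuleCat.of _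
      (MvPolynomial (Option (Fin k × Fin 6)) K ⧸ edgeIdeal K (gluedCycles k))) (2 * k + 1) := by
  intro h
  rw [← theta_length K k, add_comm] at h
  exact not_extVanish_of_socle _ _ (socleElt_notMem K k) (X_mul_socleElt hk)
    (extVanish_quot _ 1 (theta K k) _ (good_edgeIdeal K k).1 h)

end Glued

/-- For the graph `G_k` obtained by gluing `k` seven-cycles at a common
vertex, `depth(R/I(G_k)) = 2k`; equivalently, `pd(R/I(G_k)) = 4k + 1`. -/
theorem depth_gluedCycles
    {K : Type} [Field K] (k : ℕ) (hk : 1 ≤ k) :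
    mdepth (maxIdeal K (Option (Fin k × Fin 6)))
      (MvPolynomial (Option (Fin k × Fin 6)) K ⧸ edgeIdeal K (gluedCycles k)) =
        2 * k ∧
    projDim (MvPolynomial (Option (Fin k × Fin 6)) K)
      (ModuleCat.of (MvPolynomial (Option (Fin k × Fin 6)) K)
        (MvPolynomial (Option (Fin k × Fin 6)) K ⧸ edgeIdeal K (gluedCycles k))) =
      4 * k + 1 := by
  constructor
  · refine IsGreatest.csSup_eq ⟨⟨theta K k, theta_length K k, theta_mem_maxIdeal,
      theta_isRegular K k⟩, ?_⟩
    rintro d ⟨rs, rfl, hrs, hreg⟩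
    by_contra hlt
    have h := extVanish_of_isWeaklyRegular (resField K (Option (Fin k × Fin 6))) rs
      (fun r hr => mem_annihilator_resField r (hrs r hr)) (ModuleCat.of _
      (MvPolynomial (Option (Fin k × Fin 6)) K ⧸ edgeIdeal K (gluedCycles k)))
      hreg.toIsWeaklyRegular
    exact not_extVanish_glued K k hk fun i hi => h i (by omega)
  · refine IsLeast.csInf_eq ⟨(projDim_set_iff _ _).mpr (good_edgeIdeal K k).2, ?_⟩
    intro d hd
    have hd' := (projDim_set_iff _ _).mp hd
    by_contra hlt
    have h := extVanish_of_projDim (resField K (Option (Fin k × Fin 6))) _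
      extVanish_projective (4 * k) (2 * k + 1) (by simp; omega) _
      (hasProjectiveDimensionLT_of_ge (ModuleCat.of (MvPolynomial (Option (Fin k × Fin 6)) K)
        (MvPolynomial (Option (Fin k × Fin 6)) K ⧸ edgeIdeal K (gluedCycles k))) (d + 1) (4 * k + 1) (by omega))
    exact not_extVanish_glued K k hk h

end
end
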